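/- For every nonnegative integer n, the map φ_n sends K(S_{n+1}) into K(B_n), the map ψ_n sends K(B_n) into K(S_{n+1}), and ψ_n ∘ φ_n is the identity on K(S_{n+1}) while φ_n ∘ ψ_n is the identity on K(B_n); in particular, φ_n : K(S_{n+1}) → K(B_n) is a bijection with inverse ψ_n. -/

import Mathlib

/-!
The whole argument rests on a non-recursive description: `ψ(u)` is the standardization of the word
`0u` obtained by putting the letter `0` in front of `u`. Each clause of `ψ` attaches a block of
constant sign whose absolute values exceed all earlier ones, so a positive block lies above, and a
negative block below, everything before it (including the `0`), exactly as in a direct sum or a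
skew sum (`psi_main`).

Conversely, a signed permutation `u` avoiding `(-2)1` and `2(-1)` (`Mixed`) is determined by the
order type of `0u`. The letter `0` tells the signs, letters of the same sign are compared
directly, and for letters of opposite sign the later one has the larger absolute value
(`eq_of_OI_cons_zero`). Moreover such a `u` is separable if and only if `0u` avoids `3142` and
`2413` (`isSepB_iff`): an occurrence of one of these patterns in `0u` must avoid the `0` and have
constant sign, and negative occurrences are the occurrences of `(-2)(-4)(-1)(-3)` and
`(-3)(-1)(-4)(-2)` in `u`.

The clauses of `φ` and `ψ` undo each other, so a derivation of `φ(w) = u` turns into one of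
`ψ(u) = w` (`phi_main`) and vice versa (`psi_main`). Since `st(0u)` is unique and determines `u`,
both relations are single-valued, and the description of separability shows that they map
separable elements to separable elements.

It remains to see that both maps are everywhere defined. For `ψ`, a signed permutation satisfying
`Mixed` ends in a block of constant sign carrying the largest absolute values
(`exists_last_block`, `exists_psi`). For `φ`, let `w = ct` be separable. The absolute values of
the required `u` have to be ordered by the relation `Prec c`; any failure of transitivity is an
occurrence of `3142` or `2413` in `w` starting with `c` (`Prec.trans'`), so that ranks in this
order yield a `u` with `w = st(0u)` (`exists_word`). Then `ψ(u) = w`, hence `φ(w) = u`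
(`exists_phi`).
-/

namespace SepPaperFormal

noncomputable section

open Polynomial

def st (a : List ℤ) : List ℤ :=
  a.map (fun x => ((a.filter (fun y => decide (y < x))).length : ℤ) + 1)

def sts (a : List ℤ) : List ℤ :=
  a.map (fun x => x.sign * (((a.filter (fun y => decide (|y| < |x|))).length : ℤ) + 1))

def IsSignedPerm (w : List ℤ) : Prop :=
  (w.map Int.natAbs).Perm (List.range' 1 w.length)

def ContainsB (w u : List ℤ) : Prop := ∃ s : List ℤ, s.Sublist w ∧ sts s = u

def ContainsA (w u : List ℤ) : Prop := ∃ s : List ℤ, s.Sublist w ∧ st s = u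

def IsSepB (w : List ℤ) : Prop :=
  IsSignedPerm w ∧
    ¬ ContainsB w [-2, 1] ∧ ¬ ContainsB w [2, -1] ∧
    ¬ ContainsB w [3, 1, 4, 2] ∧ ¬ ContainsB w [2, 4, 1, 3] ∧
    ¬ ContainsB w [-3, -1, -4, -2] ∧ ¬ ContainsB w [-2, -4, -1, -3]

def IsSepA (w : List ℤ) : Prop :=
  IsSignedPerm w ∧ (∀ x ∈ w, 0 < x) ∧
    ¬ ContainsA w [3, 1, 4, 2] ∧ ¬ ContainsA w [2, 4, 1, 3]

def oplus (u v : List ℤ) : List ℤ :=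
  u ++ v.map (fun x => x + x.sign * (u.length : ℤ))

def ominus (u v : List ℤ) : List ℤ :=
  u.map (fun x => x + x.sign * (v.length : ℤ)) ++ v

def AllSameSign (l : List ℤ) : Prop := (∀ x ∈ l, 0 < x) ∨ (∀ x ∈ l, x < 0)

def OppSign (a b : List ℤ) : Prop := ∀ x ∈ a, ∀ y ∈ b, x * y < 0

-- blocks for statement 3
def blockOf (w : List ℤ) (q : List ℕ) (i : ℕ) : List ℤ :=
  (w.drop q[i]!).take (q[i+1]! - q[i]!)

def cutSeq (w : List ℤ) (cuts : List ℕ) : List ℕ := 0 :: (cuts ++ [w.length])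

def GoodDecomp (w : List ℤ) (cuts : List ℕ) : Prop :=
  List.Chain' (· < ·) (cutSeq w cuts) ∧
  w = List.foldl oplus (blockOf w (cutSeq w cuts) 0)
        ((List.range cuts.length).map (fun i => sts (blockOf w (cutSeq w cuts) (i + 1)))) ∧
  IsSepB (blockOf w (cutSeq w cuts) 0) ∧
  (∀ i, 1 ≤ i → i ≤ cuts.length → IsSepB (sts (blockOf w (cutSeq w cuts) i))) ∧
  (∀ j, j ≤ cuts.length → AllSameSign (blockOf w (cutSeq w cuts) j)) ∧
  (∀ i, 1 ≤ i → i ≤ cuts.length →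
    OppSign (blockOf w (cutSeq w cuts) (i - 1)) (blockOf w (cutSeq w cuts) i))

-- statement 4
inductive InC : List ℤ → Prop
  | one : InC [1]
  | negone : InC [-1]
  | dsum (u v : List ℤ) : InC u → InC v → InC (oplus u v)
  | ssum (u v : List ℤ) : InC u → InC v → AllSameSign (u ++ v) → InC (ominus u v)

-- the map φₙ as a relation
inductive PhiRel : List ℤ → List ℤ → Prop
  | base : PhiRel [1] []
  | gasc (w u : List ℤ) (p : ℕ) (hp1 : 1 ≤ p) (hp2 : p < w.length)
      (h : ∀ i j, i < p → p ≤ j → j < w.length → w[i]! < w[j]!)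
      (ih : PhiRel (w.take p) u) :
      PhiRel w (oplus u (st (w.drop p)))
  | gdes (w u : List ℤ) (p : ℕ) (hp1 : 1 ≤ p) (hp2 : p < w.length)
      (h : ∀ i j, i < p → p ≤ j → j < w.length → w[j]! < w[i]!)
      (ih : PhiRel (st (w.take p)) u) :
      PhiRel w (oplus u ((w.drop p).map (fun x => x - ((w.length - p : ℕ) : ℤ) - 1)))

-- the map ψₙ as a relation
inductive PsiRel : List ℤ → List ℤ → Prop
  | base : PsiRel [] [1]
  | pos (w u : List ℤ) (p : ℕ) (hp : p < w.length)
      (hdec : w = oplus (w.take p) (sts (w.drop p)))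
      (hsign : AllSameSign (w.drop p))
      (hlast : 0 < w[w.length - 1]!)
      (ih : PsiRel (w.take p) u) :
      PsiRel w (oplus u (sts (w.drop p)))
  | neg (w u : List ℤ) (p : ℕ) (hp : p < w.length)
      (hdec : w = oplus (w.take p) (sts (w.drop p)))
      (hsign : AllSameSign (w.drop p))
      (hlast : w[w.length - 1]! < 0)
      (ih : PsiRel (w.take p) u) :
      PsiRel w (ominus u ((sts (w.drop p)).map (fun x => x + ((w.length - p : ℕ) : ℤ) + 1)))

-- descent statistics
def DesB (w : List ℤ) : Finset ℕ :=
  (Finset.range w.length).filter (fun i => (if i = 0 then (0 : ℤ) else w[i-1]!) > w[i]!)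

def DDesB (w : List ℤ) : Finset ℕ :=
  (Finset.range w.length).filter (fun i =>
    (i = 0 ∨ (if i - 1 = 0 then (0 : ℤ) else w[i-2]!) > (if i = 0 then (0 : ℤ) else w[i-1]!)) ∧
    (if i = 0 then (0 : ℤ) else w[i-1]!) > w[i]!)

def DesA (w : List ℤ) : Finset ℕ :=
  (Finset.range w.length).filter (fun i => 1 ≤ i ∧ w[i-1]! > w[i]!)

def DDesA (w : List ℤ) : Finset ℕ :=
  (Finset.range w.length).filter (fun i => 1 ≤ i ∧
    (i = 1 ∨ w[i-2]! > w[i-1]!) ∧ w[i-1]! > w[i]!)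

-- inversions, negatives, negative sum pairs (0-based index sets)
def InvF (w : List ℤ) : Finset (ℕ × ℕ) :=
  (Finset.range w.length ×ˢ Finset.range w.length).filter
    (fun p => p.1 < p.2 ∧ w[p.2]! < w[p.1]!)

def NegF (w : List ℤ) : Finset ℕ :=
  (Finset.range w.length).filter (fun i => w[i]! < 0)

def NspF (w : List ℤ) : Finset (ℕ × ℕ) :=
  (Finset.range w.length ×ˢ Finset.range w.length).filter
    (fun p => p.1 < p.2 ∧ w[p.1]! + w[p.2]! < 0)

/-- Left weak order on `S_n` (combinatorial characterization). -/
def leS (u v : List ℤ) : Prop := InvF u ⊆ InvF v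

/-- Left weak order on `B_n` (combinatorial characterization). -/
def leB (u v : List ℤ) : Prop := InvF u ⊆ InvF v ∧ NegF u ⊆ NegF v ∧ NspF u ⊆ NspF v

/-- Coxeter length in type `B`. -/
def lenB (w : List ℤ) : ℕ := (NegF w).card + (InvF w).card + (NspF w).card

/-- Coxeter length in type `A`. -/
def lenS (w : List ℤ) : ℕ := (InvF w).card

def IsPermW (w : List ℤ) : Prop := IsSignedPerm w ∧ ∀ x ∈ w, 0 < x

/-- Rank generating function of the principal lower ideal `Λ_w^B`. -/
def FLamB (w : List ℤ) : Polynomial ℚ :=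
  ∑ᶠ u ∈ {u : List ℤ | u.length = w.length ∧ IsSignedPerm u ∧ leB u w},
    (X : Polynomial ℚ) ^ lenB u

/-- Rank generating function of the principal upper ideal `V_w^B`. -/
def FVB (w : List ℤ) : Polynomial ℚ :=
  ∑ᶠ u ∈ {u : List ℤ | u.length = w.length ∧ IsSignedPerm u ∧ leB w u},
    (X : Polynomial ℚ) ^ lenB u

/-- Rank generating function of the principal lower ideal `Λ_w^S`. -/
def FLamS (w : List ℤ) : Polynomial ℚ :=
  ∑ᶠ u ∈ {u : List ℤ | u.length = w.length ∧ IsPermW u ∧ leS u w},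
    (X : Polynomial ℚ) ^ lenS u

/-- Rank generating function of the principal upper ideal `V_w^S`. -/
def FVS (w : List ℤ) : Polynomial ℚ :=
  ∑ᶠ u ∈ {u : List ℤ | u.length = w.length ∧ IsPermW u ∧ leS w u},
    (X : Polynomial ℚ) ^ lenS u

/-- `[i] = 1 + q + ⋯ + q^{i-1}`. -/
def qint (i : ℕ) : Polynomial ℚ := ∑ j ∈ Finset.range i, (X : Polynomial ℚ) ^ j

/-- `[m]! = [1][2]⋯[m]`. -/
def qfact (m : ℕ) : Polynomial ℚ := ∏ i ∈ Finset.range m, qint (i + 1)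

-- separating trees
inductive STree where
  | leaf : STree
  | node : Bool → STree → STree → STree

def numLeaves : STree → ℕ
  | .leaf => 1
  | .node _ l r => numLeaves l + numLeaves r

def Decomp (w : List ℤ) (p : ℕ) : Prop :=
  (w = oplus (w.take p) (sts (w.drop p)) ∧ IsSepB (w.take p) ∧ IsSepB (sts (w.drop p)) ∧
    AllSameSign (w.drop p)) ∨
  (w = ominus (sts (w.take p)) (w.drop p) ∧ IsSepB (sts (w.take p)) ∧ IsSepB (w.drop p) ∧
    AllSameSign (w.drop p))

/-- `IsSepTree w T`: `T` is the (shape of the) separating tree of the separable signed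
permutation `w`, where internal nodes labeled `true` are `⊕`-nodes and those labeled
`false` are `⊖`-nodes, and the separating index is chosen largest possible. -/
inductive IsSepTree : List ℤ → STree → Prop
  | leaf (x : ℤ) : IsSepTree [x] .leaf
  | nodeA (w : List ℤ) (p : ℕ) (l r : STree)
      (hp1 : 1 ≤ p) (hp2 : p < w.length)
      (hmax : ∀ q, p < q → q < w.length → ¬ Decomp w q)
      (hdec : w = oplus (w.take p) (sts (w.drop p)))
      (h1 : IsSepB (w.take p)) (h2 : IsSepB (sts (w.drop p)))
      (hsgn : AllSameSign (w.drop p))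
      (hl : IsSepTree (w.take p) l) (hr : IsSepTree (sts (w.drop p)) r) :
      IsSepTree w (.node (decide (w[p-1]! < w[p]!)) l r)
  | nodeB (w : List ℤ) (p : ℕ) (l r : STree)
      (hp1 : 1 ≤ p) (hp2 : p < w.length)
      (hmax : ∀ q, p < q → q < w.length → ¬ Decomp w q)
      (hdec : w = ominus (sts (w.take p)) (w.drop p))
      (h1 : IsSepB (sts (w.take p))) (h2 : IsSepB (w.drop p))
      (hsgn : AllSameSign (w.drop p))
      (hl : IsSepTree (sts (w.take p)) l) (hr : IsSepTree (w.drop p) r) :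
      IsSepTree w (.node (decide (w[p-1]! < w[p]!)) l r)

/-- Multiset of leaf-counts `N(V)` over internal `⊕`-nodes `V` whose parent is a
`⊖`-node (the root, whose parent label is `none`, is excluded): the set `S⁺(w)`. -/
def plusNodes : STree → Option Bool → Multiset ℕ
  | .leaf, _ => 0
  | .node b l r, parent =>
      (if b = true ∧ parent = some false then ({numLeaves (.node b l r)} : Multiset ℕ) else 0)
        + plusNodes l (some b) + plusNodes r (some b)

/-- Multiset of leaf-counts `N(V)` over internal `⊖`-nodes `V` whose parent is a
`⊕`-node (root excluded): the set `S⁻(w)`. -/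
def minusNodes : STree → Option Bool → Multiset ℕ
  | .leaf, _ => 0
  | .node b l r, parent =>
      (if b = false ∧ parent = some true then ({numLeaves (.node b l r)} : Multiset ℕ) else 0)
        + minusNodes l (some b) + minusNodes r (some b)

/-- `∏_{m ∈ s} [m]!`. -/
def qfactProd (s : Multiset ℕ) : Polynomial ℚ := (s.map qfact).prod

/-! ### Standardization and direct sums of signed permutations -/

theorem countP_range'_lt (n k : ℕ) (h1 : 1 ≤ k) (h2 : k ≤ n + 1) :
    (List.range' 1 n).countP (fun y => decide (y < k)) + 1 = k := by
  induction n with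
  | zero => simp; omega
  | succ n ih =>
    rw [List.range'_1_concat, List.countP_append]
    by_cases h : k ≤ n + 1
    · have := ih h
      have h' : ¬ (1 + n < k) := by omega
      simp [h'] ; omega
    · have hk : k = n + 2 := by omega
      subst hk
      have : (List.range' 1 n).countP (fun y => decide (y < n + 2)) = (List.range' 1 n).length := by
        rw [List.countP_eq_length]
        intro a ha
        simp at ha ⊢; omega
      rw [this]; simp; omega

theorem isSignedPerm_iff (w : List ℤ) : IsSignedPerm w ↔
    (w.map Int.natAbs).Nodup ∧ ∀ x ∈ w, 1 ≤ x.natAbs ∧ x.natAbs ≤ w.length := by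
  constructor
  · intro h
    refine ⟨h.nodup_iff.2 List.nodup_range', fun x hx => ?_⟩
    have := h.mem_iff.1 (List.mem_map_of_mem hx)
    simp at this; omega
  · rintro ⟨h1, h2⟩
    have : (w.map Int.natAbs).Subperm (List.range' 1 w.length) := by
      apply List.subperm_of_subset h1
      intro y hy
      obtain ⟨x, hx, rfl⟩ := List.mem_map.1 hy
      have := h2 x hx
      simp; omega
    exact this.perm_of_length_le (by simp)

theorem IsSignedPerm.ne_zero {w : List ℤ} (h : IsSignedPerm w) : ∀ x ∈ w, x ≠ 0 := by
  intro x hx h0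
  have := ((isSignedPerm_iff w).1 h).2 x hx
  omega

/-- In a signed permutation, `|x|` is one more than the number of entries of smaller absolute
value. -/
theorem IsSignedPerm.rank {w : List ℤ} (h : IsSignedPerm w) {x : ℤ} (hx : x ∈ w) :
    ((w.filter (fun y => decide (|y| < |x|))).length : ℤ) + 1 = |x| := by
  have h3 := ((isSignedPerm_iff w).1 h).2 x hx
  have h1 := countP_range'_lt w.length x.natAbs (by omega) (by omega)
  rw [← h.countP_eq, List.countP_map] at h1
  rw [← List.countP_eq_length_filter, Int.abs_eq_natAbs x]
  have h2 : w.countP ((fun y => decide (y < x.natAbs)) ∘ Int.natAbs) =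
      w.countP (fun y => decide (|y| < (x.natAbs : ℤ))) := by
    apply List.countP_congr
    intro y _
    simp only [Function.comp, decide_eq_true_eq, Int.abs_eq_natAbs]; omega
  rw [← h2]
  exact_mod_cast h1

theorem IsSignedPerm.sts_eq {w : List ℤ} (h : IsSignedPerm w) : sts w = w := by
  conv_rhs => rw [← List.map_id w]
  apply List.map_congr_left
  intro x hx
  rw [h.rank hx, Int.sign_mul_abs]; rfl

theorem st_eq_sts {w : List ℤ} (h : ∀ x ∈ w, 0 < x) : st w = sts w := by
  apply List.map_congr_left
  intro x hx
  have : w.filter (fun y => decide (y < x)) = w.filter (fun y => decide (|y| < |x|)) := by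
    apply List.filter_congr
    intro y hy
    rw [abs_of_pos (h x hx), abs_of_pos (h y hy)]
  rw [this, Int.sign_eq_one_of_pos (h x hx), one_mul]

theorem IsPermW.st_eq {w : List ℤ} (h : IsPermW w) : st w = w := by
  rw [st_eq_sts h.2, h.1.sts_eq]

theorem length_filter_lt {α : Type*} {l : List α} {P Q : α → Prop} [DecidablePred P]
    [DecidablePred Q] (h : ∀ y ∈ l, P y → Q y) {x : α} (hx : x ∈ l) (hQ : Q x) (hP : ¬ P x) :
    (l.filter (fun y => decide (P y))).length < (l.filter (fun y => decide (Q y))).length := by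
  have h1 : l.filter (fun y => decide (P y)) =
      (l.filter (fun y => decide (Q y))).filter (fun y => decide (P y)) := by
    rw [List.filter_filter]
    apply List.filter_congr
    intro y hy
    by_cases hp : P y
    · simp [hp, h y hy hp]
    · simp [hp]
  rw [h1, List.length_filter_lt_length_iff_exists]
  exact ⟨x, by simp [hx, hQ], by simpa using hP⟩

/-- Comparing ranks with respect to `f` is comparing values of `f`; it is used with `f = id` for
`st` and `f = |·|` for `sts`. -/
theorem rank_lt_iff (a : List ℤ) (f : ℤ → ℤ) {x y : ℤ} (hx : x ∈ a) (hy : y ∈ a) :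
    (a.filter (fun z => decide (f z < f x))).length <
      (a.filter (fun z => decide (f z < f y))).length ↔ f x < f y := by
  have key : ∀ {x y : ℤ}, x ∈ a → f x < f y → (a.filter (fun z => decide (f z < f x))).length <
      (a.filter (fun z => decide (f z < f y))).length := by
    intro x y hx h
    exact length_filter_lt (P := fun z => f z < f x) (Q := fun z => f z < f y)
      (fun z _ hz => hz.trans h) hx h (lt_irrefl _)
  refine ⟨fun h => ?_, key hx⟩
  rcases lt_trichotomy (f x) (f y) with h1 | h1 | h1
  · exact h1
  · rw [h1] at h; exact absurd h (lt_irrefl _)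
  · exact absurd h (key hy h1).not_gt

theorem length_sts (a : List ℤ) : (sts a).length = a.length := by simp [sts]

theorem length_st (a : List ℤ) : (st a).length = a.length := by simp [st]

theorem length_oplus (a b : List ℤ) : (oplus a b).length = a.length + b.length := by
  simp [oplus]

theorem length_ominus (a b : List ℤ) : (ominus a b).length = a.length + b.length := by
  simp [ominus]

theorem natAbs_sign_mul {x : ℤ} (hx : x ≠ 0) (k : ℕ) :
    (x.sign * ((k : ℤ) + 1)).natAbs = k + 1 := by
  rw [Int.natAbs_mul, Int.natAbs_sign_of_ne_zero hx]; omega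

theorem natAbs_add_sign {x : ℤ} (hx : x ≠ 0) (k : ℕ) :
    (x + x.sign * (k : ℤ)).natAbs = x.natAbs + k := by
  rcases lt_or_gt_of_ne hx with h | h
  · rw [Int.sign_eq_neg_one_of_neg h]; omega
  · rw [Int.sign_eq_one_of_pos h]; omega

theorem isSignedPerm_sts {b : List ℤ} (h1 : (b.map Int.natAbs).Nodup) (h0 : ∀ x ∈ b, x ≠ 0) :
    IsSignedPerm (sts b) := by
  rw [isSignedPerm_iff]
  constructor
  · have hb := List.Nodup.of_map _ h1
    rw [sts, List.map_map]
    apply List.Nodup.map_on _ hb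
    intro x hx y hy hxy
    simp only [Function.comp, natAbs_sign_mul (h0 x hx), natAbs_sign_mul (h0 y hy)] at hxy
    have e1 := not_lt.1 (mt (rank_lt_iff b abs hx hy).2 (by omega))
    have e2 := not_lt.1 (mt (rank_lt_iff b abs hy hx).2 (by omega))
    apply List.inj_on_of_nodup_map h1 hx hy
    rw [Int.abs_eq_natAbs, Int.abs_eq_natAbs] at e1 e2
    omega
  · intro x hx
    rw [length_sts]
    obtain ⟨y, hy, rfl⟩ := List.mem_map.1 hx
    rw [natAbs_sign_mul (h0 y hy)]
    refine ⟨by omega, ?_⟩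
    have : (b.filter (fun z => decide (|z| < |y|))).length < b.length :=
      List.length_filter_lt_length_iff_exists.2 ⟨y, hy, by simp⟩
    omega

theorem sign_of_mem_sts {b : List ℤ} :
    ((∀ x ∈ b, 0 < x) → ∀ x ∈ sts b, 0 < x) ∧ ((∀ x ∈ b, x < 0) → ∀ x ∈ sts b, x < 0) := by
  constructor
  · intro h x hx
    obtain ⟨y, hy, rfl⟩ := List.mem_map.1 hx
    rw [Int.sign_eq_one_of_pos (h y hy)]; omega
  · intro h x hx
    obtain ⟨y, hy, rfl⟩ := List.mem_map.1 hx
    rw [Int.sign_eq_neg_one_of_neg (h y hy)]; omega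

theorem IsSignedPerm.oplus {u v : List ℤ} (hu : IsSignedPerm u) (hv : IsSignedPerm v) :
    IsSignedPerm (oplus u v) := by
  unfold IsSignedPerm
  rw [length_oplus, SepPaperFormal.oplus, List.map_append, ← List.range'_append_1]
  apply List.Perm.append hu
  have h1 : (v.map (fun x => x + x.sign * (u.length : ℤ))).map Int.natAbs =
      (v.map Int.natAbs).map (fun k => k + u.length) := by
    rw [List.map_map, List.map_map]
    apply List.map_congr_left
    intro x hx
    exact natAbs_add_sign (hv.ne_zero x hx) _
  rw [h1]
  refine (hv.map _).trans ?_
  apply List.Perm.of_eq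
  apply List.ext_getElem <;> simp
  intros; omega

theorem IsSignedPerm.append_comm {a b : List ℤ} (h : IsSignedPerm (a ++ b)) :
    IsSignedPerm (b ++ a) := by
  unfold IsSignedPerm at *
  have e : (b ++ a).length = (a ++ b).length := by simp; omega
  rw [e]
  exact ((List.perm_append_comm).map _).trans h

/-- If in a signed permutation the entries of a prefix `a` have smaller absolute values than those
of the remaining suffix `b`, the prefix is itself a signed permutation. -/
theorem IsSignedPerm.of_append_left {a b : List ℤ} (h : IsSignedPerm (a ++ b))
    (hab : ∀ x ∈ a, ∀ y ∈ b, |x| < |y|) : IsSignedPerm a := by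
  have h' := (isSignedPerm_iff _).1 h
  rw [isSignedPerm_iff]
  refine ⟨?_, fun x hx => ?_⟩
  · have := h'.1
    rw [List.map_append] at this
    exact this.of_append_left
  · have h1 := h.rank (x := x) (by simp [hx])
    have h2 := h'.2 x (by simp [hx])
    have h3 : b.filter (fun y => decide (|y| < |x|)) = [] := by
      rw [List.filter_eq_nil_iff]
      intro y hy
      simpa using (hab x hx y hy).le
    rw [List.filter_append, h3, List.append_nil] at h1
    have : (a.filter (fun z => decide (|z| < |x|))).length < a.length :=
      List.length_filter_lt_length_iff_exists.2 ⟨x, hx, by simp⟩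
    have h4 := Int.abs_eq_natAbs x
    omega

theorem IsSignedPerm.sts_suffix {a b : List ℤ} (h : IsSignedPerm (a ++ b)) :
    IsSignedPerm (sts b) := by
  apply isSignedPerm_sts
  · have := ((isSignedPerm_iff _).1 h).1
    rw [List.map_append] at this
    exact this.of_append_right
  · intro x hx
    exact h.ne_zero x (by simp [hx])

/-- A signed permutation `a b` splits as the direct sum of `a` and the standardization of `b`
exactly when `a` holds the smaller absolute values. -/
theorem IsSignedPerm.eq_oplus_iff {a b : List ℤ} (h : IsSignedPerm (a ++ b)) :
    a ++ b = SepPaperFormal.oplus a (sts b) ↔ ∀ x ∈ a, ∀ y ∈ b, |x| < |y| := by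
  have e : SepPaperFormal.oplus a (sts b) = a ++ b.map (fun x =>
      x.sign * (((b.filter (fun y => decide (|y| < |x|))).length : ℤ) + 1 + a.length)) := by
    rw [SepPaperFormal.oplus, sts, List.map_map]
    congr 1
    apply List.map_congr_left
    intro x hx
    have hx0 : x ≠ 0 := h.ne_zero x (by simp [hx])
    rcases lt_or_gt_of_ne hx0 with h | h
    · simp only [Function.comp, Int.sign_eq_neg_one_of_neg h]
      rw [Int.sign_eq_neg_one_of_neg (by omega)]; ring
    · simp only [Function.comp, Int.sign_eq_one_of_pos h]
      rw [Int.sign_eq_one_of_pos (by omega)]; ring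
  rw [e, List.append_cancel_left_eq]
  have key : ∀ y ∈ b, ((a.filter (fun z => decide (|z| < |y|))).length : ℤ) +
      (b.filter (fun z => decide (|z| < |y|))).length + 1 = |y| := by
    intro y hy
    have := h.rank (x := y) (by simp [hy])
    rw [List.filter_append, List.length_append] at this
    omega
  constructor
  · intro hb x hx y hy
    conv_lhs at hb => rw [← List.map_id b]
    have h1 := List.map_inj_left.1 hb y hy
    have h2 := key y hy
    have h4 : |y| = (((b.filter (fun z => decide (|z| < |y|))).length : ℤ) + 1 + a.length) := by
      have h5 : y ≠ 0 := h.ne_zero y (by simp [hy])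
      rcases lt_or_gt_of_ne h5 with h6 | h6
      · rw [Int.sign_eq_neg_one_of_neg h6, id] at h1
        rw [abs_of_neg h6] at h1 ⊢
        omega
      · rw [Int.sign_eq_one_of_pos h6, id] at h1
        rw [abs_of_pos h6] at h1 ⊢
        omega
    have h3 : (a.filter (fun z => decide (|z| < |y|))).length = a.length := by omega
    rw [List.length_filter_eq_length_iff] at h3
    simpa using h3 x hx
  · intro hab
    conv_lhs => rw [← List.map_id b]
    apply List.map_congr_left
    intro y hy
    have h1 : a.filter (fun z => decide (|z| < |y|)) = a := by
      rw [List.filter_eq_self]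
      intro x hx
      simpa using hab x hx y hy
    have h2 := key y hy
    rw [h1] at h2
    have h3 : (((b.filter (fun z => decide (|z| < |y|))).length : ℤ) + 1 + a.length) = |y| := by
      omega
    rw [h3, Int.sign_mul_abs]; rfl

theorem abs_lt_of_oplus {u v : List ℤ} (hu : IsSignedPerm u) (hv : IsSignedPerm v) :
    ∀ x ∈ u, ∀ y ∈ v.map (fun x => x + x.sign * (u.length : ℤ)), |x| < |y| := by
  intro x hx y hy
  obtain ⟨z, hz, rfl⟩ := List.mem_map.1 hy
  have h1 := ((isSignedPerm_iff _).1 hu).2 x hx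
  have h2 := natAbs_add_sign (hv.ne_zero z hz) u.length
  have h3 := ((isSignedPerm_iff _).1 hv).2 z hz
  rw [Int.abs_eq_natAbs, Int.abs_eq_natAbs]
  omega

theorem sts_shift {v : List ℤ} (hv : IsSignedPerm v) (k : ℕ) :
    sts (v.map (fun x => x + x.sign * (k : ℤ))) = v := by
  conv_rhs => rw [← hv.sts_eq]
  rw [sts, sts, List.map_map]
  apply List.map_congr_left
  intro x hx
  have hs : (x + x.sign * (k : ℤ)).sign = x.sign := by
    rcases lt_or_gt_of_ne (hv.ne_zero x hx) with h | h
    · rw [Int.sign_eq_neg_one_of_neg h, Int.sign_eq_neg_one_of_neg (by omega)]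
    · rw [Int.sign_eq_one_of_pos h, Int.sign_eq_one_of_pos (by omega)]
  simp only [Function.comp]
  rw [hs, List.filter_map, List.length_map]
  congr 4
  apply List.filter_congr
  intro y hy
  have h1 := natAbs_add_sign (hv.ne_zero x hx) k
  have h2 := natAbs_add_sign (hv.ne_zero y hy) k
  simp only [Function.comp, Int.abs_eq_natAbs, h1, h2]
  simp

/-! ### The recursive clauses of `φ` and `ψ`; `ψ ∘ φ` is the identity -/

theorem getElem!_append_left_mem {a b : List ℤ} {i : ℕ} (h : i < a.length) :
    (a ++ b)[i]! ∈ a := by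
  rw [getElem!_pos (a ++ b) i (by simp; omega), List.getElem_append_left h]
  exact List.getElem_mem h

theorem getElem!_append_right_mem {a b : List ℤ} {i : ℕ} (h : a.length ≤ i)
    (h2 : i < (a ++ b).length) : (a ++ b)[i]! ∈ b := by
  rw [getElem!_pos (a ++ b) i h2, List.getElem_append_right h]
  exact List.getElem_mem _

theorem forall_take_drop {w : List ℤ} {p : ℕ} {R : ℤ → ℤ → Prop}
    (h : ∀ i j, i < p → p ≤ j → j < w.length → R w[i]! w[j]!) :
    ∀ x ∈ w.take p, ∀ y ∈ w.drop p, R x y := by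
  intro x hx y hy
  obtain ⟨i, hi, rfl⟩ := List.mem_iff_getElem.1 hx
  obtain ⟨j, hj, rfl⟩ := List.mem_iff_getElem.1 hy
  simp only [List.length_take, List.length_drop] at hi hj
  have := h i (p + j) (by omega) (by omega) (by omega)
  rw [getElem!_pos w i (by omega), getElem!_pos w (p + j) (by omega)] at this
  simpa using this

theorem sign_shift (v : List ℤ) (k : ℕ) :
    ((∀ x ∈ v, 0 < x) → ∀ x ∈ v.map (fun x => x + x.sign * (k : ℤ)), 0 < x) ∧
    ((∀ x ∈ v, x < 0) → ∀ x ∈ v.map (fun x => x + x.sign * (k : ℤ)), x < 0) := by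
  constructor
  · intro h x hx
    obtain ⟨y, hy, rfl⟩ := List.mem_map.1 hx
    have := h y hy
    rw [Int.sign_eq_one_of_pos this]; omega
  · intro h x hx
    obtain ⟨y, hy, rfl⟩ := List.mem_map.1 hx
    have := h y hy
    rw [Int.sign_eq_neg_one_of_neg this]; omega

theorem IsPermW.oplus {u v : List ℤ} (hu : IsPermW u) (hv : IsPermW v) :
    IsPermW (oplus u v) := by
  refine ⟨hu.1.oplus hv.1, fun x hx => ?_⟩
  rcases List.mem_append.1 hx with h | h
  · exact hu.2 x h
  · exact (sign_shift v _).1 hv.2 x h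

theorem IsPermW.ominus {u v : List ℤ} (hu : IsPermW u) (hv : IsPermW v) :
    IsPermW (ominus u v) := by
  have h := hv.oplus hu
  refine ⟨h.1.append_comm, fun x hx => h.2 x ?_⟩
  rcases List.mem_append.1 hx with h | h
  · exact List.mem_append_right _ h
  · exact List.mem_append_left _ h

/-- The letterwise map `x ↦ x - (m + 1)` sends permutations of `[m]` to signed permutations with
only negative entries. -/
theorem IsPermW.sub {c : List ℤ} (hc : IsPermW c) :
    IsSignedPerm (c.map (fun x => x - (c.length : ℤ) - 1)) ∧
      ∀ x ∈ c.map (fun x => x - (c.length : ℤ) - 1), x < 0 := by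
  have h := (isSignedPerm_iff c).1 hc.1
  constructor
  · rw [isSignedPerm_iff, List.map_map]
    constructor
    · apply List.Nodup.map_on _ (List.Nodup.of_map _ h.1)
      intro x hx y hy hxy
      have h1 := h.2 x hx
      have h2 := h.2 y hy
      have h3 := hc.2 x hx
      have h4 := hc.2 y hy
      simp only [Function.comp] at hxy
      omega
    · intro x hx
      obtain ⟨y, hy, rfl⟩ := List.mem_map.1 hx
      have h1 := h.2 y hy
      have h3 := hc.2 y hy
      simp only [List.length_map]; omega
  · intro x hx
    obtain ⟨y, hy, rfl⟩ := List.mem_map.1 hx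
    have h1 := h.2 y hy
    omega

/-- The letterwise map `x ↦ x + m + 1`, inverse to that of `IsPermW.sub`. -/
theorem IsSignedPerm.isPermW_add {v : List ℤ} (hv : IsSignedPerm v) (hneg : ∀ x ∈ v, x < 0) :
    IsPermW (v.map (fun x => x + (v.length : ℤ) + 1)) := by
  have h := (isSignedPerm_iff v).1 hv
  constructor
  · rw [isSignedPerm_iff, List.map_map]
    constructor
    · apply List.Nodup.map_on _ (List.Nodup.of_map _ h.1)
      intro x hx y hy hxy
      have h1 := h.2 x hx
      have h2 := h.2 y hy
      have h3 := hneg x hx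
      have h4 := hneg y hy
      simp only [Function.comp] at hxy
      omega
    · intro x hx
      obtain ⟨y, hy, rfl⟩ := List.mem_map.1 hx
      have h1 := h.2 y hy
      have h3 := hneg y hy
      simp only [List.length_map]; omega
  · intro x hx
    obtain ⟨y, hy, rfl⟩ := List.mem_map.1 hx
    have h1 := h.2 y hy
    omega

theorem take_oplus (u v : List ℤ) : (oplus u v).take u.length = u := by
  simp [oplus]

theorem drop_oplus (u v : List ℤ) : (oplus u v).drop u.length =
    v.map (fun x => x + x.sign * (u.length : ℤ)) := by
  simp [oplus]

theorem length_pos' {v : List ℤ} (h : v ≠ []) : 0 < v.length := List.length_pos_iff.2 h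

/-- The clause of `ψ` for a positive last block, freed of prefixes and suffixes. -/
theorem PsiRel.oplus_pos {u v a : List ℤ} (hv : IsPermW v) (hne : v ≠ []) (h : PsiRel u a) :
    PsiRel (oplus u v) (oplus a v) := by
  have hp := length_pos' hne
  have hl := length_oplus u v
  have hs : sts ((oplus u v).drop u.length) = v := by rw [drop_oplus, sts_shift hv.1]
  have key := PsiRel.pos (oplus u v) a u.length (by omega) (by rw [hs, take_oplus])
    (Or.inl (by rw [drop_oplus]; exact (sign_shift v _).1 hv.2))
    ((sign_shift v u.length).1 hv.2 _ (getElem!_append_right_mem (by omega)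
      (by rw [← oplus]; omega)))
    (by rw [take_oplus]; exact h)
  rwa [hs] at key

/-- The clause of `ψ` for a negative last block, freed of prefixes and suffixes. -/
theorem PsiRel.oplus_neg {u v a : List ℤ} (hv : IsSignedPerm v) (hneg : ∀ x ∈ v, x < 0)
    (hne : v ≠ []) (h : PsiRel u a) :
    PsiRel (oplus u v) (ominus a (v.map (fun x => x + (v.length : ℤ) + 1))) := by
  have hp := length_pos' hne
  have hl := length_oplus u v
  have hs : sts ((oplus u v).drop u.length) = v := by rw [drop_oplus, sts_shift hv]
  have key := PsiRel.neg (oplus u v) a u.length (by omega) (by rw [hs, take_oplus])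
    (Or.inr (by rw [drop_oplus]; exact (sign_shift v _).2 hneg))
    ((sign_shift v u.length).2 hneg _ (getElem!_append_right_mem (by omega)
      (by rw [← oplus]; omega)))
    (by rw [take_oplus]; exact h)
  rw [hs] at key
  have e : (oplus u v).length - u.length = v.length := by omega
  rwa [e] at key

theorem lt_of_oplus {u v : List ℤ} (hu : IsPermW u) (hv : IsPermW v) :
    ∀ x ∈ u, ∀ y ∈ v.map (fun x => x + x.sign * (u.length : ℤ)), x < y := by
  intro x hx y hy
  have h := abs_lt_of_oplus hu.1 hv.1 x hx y hy
  rwa [abs_of_pos (hu.2 x hx), abs_of_pos ((sign_shift v _).1 hv.2 y hy)] at h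

/-- The clause of `φ` for a global ascent, for a word already given as a direct sum. -/
theorem PhiRel.oplus_asc {w v a : List ℤ} (hw : IsPermW w) (hwne : w ≠ []) (hv : IsPermW v)
    (hne : v ≠ []) (h : PhiRel w a) : PhiRel (oplus w v) (oplus a v) := by
  have hp := length_pos' hne
  have hp' := length_pos' hwne
  have hl := length_oplus w v
  have hs : st ((oplus w v).drop w.length) = v := by
    rw [drop_oplus, st_eq_sts ((sign_shift v _).1 hv.2), sts_shift hv.1]
  have key := PhiRel.gasc (oplus w v) a w.length (by omega) (by omega)
    (fun i j hi hj hj' => lt_of_oplus hw hv _ (getElem!_append_left_mem hi) _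
      (getElem!_append_right_mem hj (by rw [← oplus]; omega)))
    (by rw [take_oplus]; exact h)
  rwa [hs] at key

/-- The clause of `φ` for a global descent, for a word already given as a skew sum. -/
theorem PhiRel.ominus_des {w c a : List ℤ} (hw : IsPermW w) (hwne : w ≠ []) (hc : IsPermW c)
    (hne : c ≠ []) (h : PhiRel w a) :
    PhiRel (ominus w c) (oplus a (c.map (fun x => x - (c.length : ℤ) - 1))) := by
  have hp := length_pos' hne
  have hp' := length_pos' hwne
  have hl := length_ominus w c
  have htake : (ominus w c).take w.length = w.map (fun x => x + x.sign * (c.length : ℤ)) := by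
    simp [ominus]
  have hdrop : (ominus w c).drop w.length = c := by
    simp [ominus]
  have hs : st ((ominus w c).take w.length) = w := by
    rw [htake, st_eq_sts ((sign_shift w _).1 hw.2), sts_shift hw.1]
  have key := PhiRel.gdes (ominus w c) a w.length (by omega) (by omega)
    (fun i j hi hj hj' => lt_of_oplus hc hw _
      (getElem!_append_right_mem (by simpa using hj) (by rw [← ominus]; omega)) _
      (getElem!_append_left_mem (by simpa using hi)))
    (by rw [hs]; exact h)
  have e : (ominus w c).length - w.length = c.length := by omega
  rwa [hdrop, e] at key

/-- Every change of sign is an increase of absolute value; for signed permutations this is the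
avoidance of `(-2)1` and `2(-1)`. A letter `0` may be read with either sign. -/
def Mixed (u : List ℤ) : Prop :=
  u.Pairwise (fun x y => (x ≤ 0 → 0 < y → -x < y) ∧ (0 ≤ x → y < 0 → x < -y))

theorem Mixed.oplus {u v : List ℤ} (hu : IsSignedPerm u) (hv : IsSignedPerm v)
    (hm : Mixed u) (hs : AllSameSign v) : Mixed (oplus u v) := by
  unfold Mixed at *
  rw [SepPaperFormal.oplus, List.pairwise_append]
  refine ⟨hm, ?_, ?_⟩
  · apply List.pairwise_of_forall_mem_list
    intro x hx y hy
    rcases hs with hs | hs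
    · have h1 := (sign_shift v u.length).1 hs x hx
      have h2 := (sign_shift v u.length).1 hs y hy
      omega
    · have h1 := (sign_shift v u.length).2 hs x hx
      have h2 := (sign_shift v u.length).2 hs y hy
      omega
  · intro x hx y hy
    have h := abs_lt_of_oplus hu hv x hx y hy
    rw [Int.abs_eq_natAbs, Int.abs_eq_natAbs] at h
    omega

/-- Each step in a derivation of `φ(w) = u` is undone by the step of `ψ` with the same summands.
In particular `ψ(u) = w` needs no separability, only that `w` is a permutation. -/
theorem phi_main {w u : List ℤ} (h : PhiRel w u) : IsPermW w →
    w.length = u.length + 1 ∧ IsSignedPerm u ∧ Mixed u ∧ PsiRel u w := by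
  induction h with
  | base =>
    intro _
    exact ⟨rfl, by simp [IsSignedPerm], List.Pairwise.nil, PsiRel.base⟩
  | gasc w u p hp1 hp2 h _ ih =>
    intro hw
    have hlt := forall_take_drop (R := fun x y => x < y) h
    have hsplit := List.take_append_drop p w
    have hlw : w.length = (w.take p).length + (w.drop p).length := by simp; omega
    have hdl : (w.drop p).length = w.length - p := List.length_drop
    generalize w.take p = a at *
    generalize w.drop p = b at *
    subst hsplit
    have hpos : (∀ x ∈ a, 0 < x) ∧ (∀ x ∈ b, 0 < x) :=
      ⟨fun x hx => hw.2 x (by simp [hx]), fun x hx => hw.2 x (by simp [hx])⟩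
    have habs : ∀ x ∈ a, ∀ y ∈ b, |x| < |y| := by
      intro x hx y hy
      rw [abs_of_pos (hpos.1 x hx), abs_of_pos (hpos.2 y hy)]
      exact hlt x hx y hy
    have ha : IsPermW a := ⟨hw.1.of_append_left habs, hpos.1⟩
    have hb : IsPermW (sts b) := ⟨hw.1.sts_suffix, sign_of_mem_sts.1 hpos.2⟩
    have hne : sts b ≠ [] := List.length_pos_iff.1 (by rw [length_sts]; omega)
    obtain ⟨h1, h2, h3, h4⟩ := ih ha
    rw [st_eq_sts hpos.2]
    refine ⟨?_, h2.oplus hb.1, Mixed.oplus h2 hb.1 h3 (Or.inl hb.2), ?_⟩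
    · rw [length_oplus, length_sts]; omega
    · conv => arg 2; rw [hw.1.eq_oplus_iff.2 habs]
      exact h4.oplus_pos hb hne
  | gdes w u p hp1 hp2 h _ ih =>
    intro hw
    have hlt := forall_take_drop (R := fun x y => y < x) h
    have hsplit := List.take_append_drop p w
    have hlw : w.length = (w.take p).length + (w.drop p).length := by simp; omega
    have hdl : (w.drop p).length = w.length - p := List.length_drop
    generalize w.take p = a at *
    generalize w.drop p = b at *
    subst hsplit
    have hpos : (∀ x ∈ a, 0 < x) ∧ (∀ x ∈ b, 0 < x) :=
      ⟨fun x hx => hw.2 x (by simp [hx]), fun x hx => hw.2 x (by simp [hx])⟩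
    have habs : ∀ x ∈ b, ∀ y ∈ a, |x| < |y| := by
      intro x hx y hy
      rw [abs_of_pos (hpos.2 x hx), abs_of_pos (hpos.1 y hy)]
      exact hlt y hy x hx
    have hw' := hw.1.append_comm
    have hb : IsPermW b := ⟨hw'.of_append_left habs, hpos.2⟩
    have ha : IsPermW (sts a) := ⟨hw'.sts_suffix, sign_of_mem_sts.1 hpos.1⟩
    rw [st_eq_sts hpos.1] at ih
    obtain ⟨h1, h2, h3, h4⟩ := ih ha
    rw [← hdl]
    obtain ⟨hv, hneg⟩ := hb.sub
    have hne : b.map (fun x => x - (b.length : ℤ) - 1) ≠ [] :=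
      List.length_pos_iff.1 (by rw [List.length_map]; omega)
    refine ⟨?_, h2.oplus hv, Mixed.oplus h2 hv h3 (Or.inr hneg), ?_⟩
    · rw [length_sts] at h1
      rw [length_oplus, List.length_map]; omega
    · have key := h4.oplus_neg hv hneg hne
      have e1 : (b.map (fun x => x - (b.length : ℤ) - 1)).map (fun x => x +
          ((b.map (fun x => x - (b.length : ℤ) - 1)).length : ℤ) + 1) = b := by
        rw [List.map_map]
        conv_rhs => rw [← List.map_id b]
        apply List.map_congr_left
        intro x _
        simp only [Function.comp, List.length_map, id]; ring
      have e2 : ominus (sts a) b = a ++ b := by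
        have := hw'.eq_oplus_iff.2 habs
        rw [oplus, List.append_cancel_left_eq] at this
        rw [ominus, ← this]
      rwa [e1, e2] at key

/-! ### Order isomorphism of words -/

/-- The lists `a` and `b` are order isomorphic: they are the two coordinates of one list of pairs
whose coordinates are ordered in the same way. -/
def OI (a b : List ℤ) : Prop :=
  ∃ z : List (ℤ × ℤ), z.map Prod.fst = a ∧ z.map Prod.snd = b ∧
    ∀ p ∈ z, ∀ q ∈ z, (p.1 < q.1 ↔ p.2 < q.2)

theorem OI.symm {a b : List ℤ} (h : OI a b) : OI b a := by
  obtain ⟨z, rfl, rfl, h⟩ := h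
  refine ⟨z.map Prod.swap, by simp, by simp, ?_⟩
  intro p hp q hq
  simp only [List.mem_map] at hp hq
  obtain ⟨p, hp, rfl⟩ := hp
  obtain ⟨q, hq, rfl⟩ := hq
  exact (h p hp q hq).symm

theorem OI.trans {a b c : List ℤ} (h : OI a b) (h' : OI b c) : OI a c := by
  obtain ⟨z, rfl, rfl, h⟩ := h
  obtain ⟨y, hy, rfl, h'⟩ := h'
  have key : ∀ z y : List (ℤ × ℤ), y.map Prod.fst = z.map Prod.snd → ∃ t : List (ℤ × ℤ × ℤ),
      z = t.map (fun p => (p.1, p.2.1)) ∧ y = t.map Prod.snd := by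
    intro z
    induction z with
    | nil => intro y hy; simp at hy; exact ⟨[], by simp [hy]⟩
    | cons p z ih =>
      intro y hy
      cases y with
      | nil => simp at hy
      | cons q y =>
        simp only [List.map_cons, List.cons.injEq] at hy
        obtain ⟨t, h1, h2⟩ := ih y hy.2
        refine ⟨(p.1, q) :: t, ?_, ?_⟩
        · simp [h1, hy.1]
        · simp [h2]
  obtain ⟨t, rfl, rfl⟩ := key z y hy
  refine ⟨t.map (fun p => (p.1, p.2.2)), by simp, by simp, ?_⟩
  intro p hp q hq
  simp only [List.mem_map] at hp hq
  obtain ⟨p, hp, rfl⟩ := hp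
  obtain ⟨q, hq, rfl⟩ := hq
  exact (h _ (List.mem_map_of_mem hp) _ (List.mem_map_of_mem hq)).trans
    (h' _ (List.mem_map_of_mem hp) _ (List.mem_map_of_mem hq))

theorem OI.st_eq {a b : List ℤ} (h : OI a b) : st a = st b := by
  obtain ⟨z, rfl, rfl, h⟩ := h
  unfold st
  rw [List.map_map, List.map_map]
  apply List.map_congr_left
  intro p hp
  simp only [Function.comp, List.filter_map, List.length_map]
  congr 3
  apply List.filter_congr
  intro q hq
  simp [h q hq p hp]

theorem IsPermW.eq_of_OI {a b : List ℤ} (ha : IsPermW a) (hb : IsPermW b) (h : OI a b) :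
    a = b := by
  rw [← ha.st_eq, ← hb.st_eq, h.st_eq]

theorem OI.append_asc {a b a' b' : List ℤ} (h : OI a a') (h' : OI b b')
    (h1 : ∀ x ∈ a, ∀ y ∈ b, x < y) (h2 : ∀ x ∈ a', ∀ y ∈ b', x < y) :
    OI (a ++ b) (a' ++ b') := by
  obtain ⟨z, rfl, rfl, h⟩ := h
  obtain ⟨y, rfl, rfl, h'⟩ := h'
  refine ⟨z ++ y, by simp, by simp, ?_⟩
  have key : ∀ p ∈ z, ∀ q ∈ y, p.1 < q.1 ∧ p.2 < q.2 := fun p hp q hq =>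
    ⟨h1 _ (List.mem_map_of_mem hp) _ (List.mem_map_of_mem hq),
      h2 _ (List.mem_map_of_mem hp) _ (List.mem_map_of_mem hq)⟩
  intro p hp q hq
  rcases List.mem_append.1 hp with hp | hp <;> rcases List.mem_append.1 hq with hq | hq
  · exact h p hp q hq
  · have := key p hp q hq; omega
  · have := key q hq p hp; omega
  · exact h' p hp q hq

theorem OI.append_des {a b a' b' : List ℤ} (h : OI a a') (h' : OI b b')
    (h1 : ∀ x ∈ a, ∀ y ∈ b, y < x) (h2 : ∀ x ∈ a', ∀ y ∈ b', y < x) :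
    OI (a ++ b) (a' ++ b') := by
  obtain ⟨z, rfl, rfl, h⟩ := h
  obtain ⟨y, rfl, rfl, h'⟩ := h'
  refine ⟨z ++ y, by simp, by simp, ?_⟩
  have key : ∀ p ∈ z, ∀ q ∈ y, q.1 < p.1 ∧ q.2 < p.2 := fun p hp q hq =>
    ⟨h1 _ (List.mem_map_of_mem hp) _ (List.mem_map_of_mem hq),
      h2 _ (List.mem_map_of_mem hp) _ (List.mem_map_of_mem hq)⟩
  intro p hp q hq
  rcases List.mem_append.1 hp with hp | hp <;> rcases List.mem_append.1 hq with hq | hq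
  · exact h p hp q hq
  · have := key p hp q hq; omega
  · have := key q hq p hp; omega
  · exact h' p hp q hq

theorem OI_map {v : List ℤ} {f g : ℤ → ℤ} (h : ∀ x ∈ v, ∀ y ∈ v, (f x < f y ↔ g x < g y)) :
    OI (v.map f) (v.map g) := by
  refine ⟨v.map (fun x => (f x, g x)), by simp, by simp, ?_⟩
  intro p hp q hq
  simp only [List.mem_map] at hp hq
  obtain ⟨p, hp, rfl⟩ := hp
  obtain ⟨q, hq, rfl⟩ := hq
  exact h p hp q hq

/-! ### `ψ(u)` is the standardization of `0u`; `φ ∘ ψ` is the identity -/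

/-- The value `w` of `ψ` at `u` is the standardization of `0u`, and each step in the derivation of
`ψ(u) = w` is undone by a step of `φ`. -/
theorem psi_main {u w : List ℤ} (h : PsiRel u w) : IsSignedPerm u →
    w.length = u.length + 1 ∧ IsPermW w ∧ OI w (0 :: u) ∧ PhiRel w u := by
  induction h with
  | base =>
    intro _
    refine ⟨rfl, ⟨by simp [IsSignedPerm], by simp⟩, ⟨[(1, 0)], by simp⟩, PhiRel.base⟩
  | pos u w p hp hdec hsign hlast _ ih =>
    intro hu
    have hsplit := List.take_append_drop p u
    have hdl : (u.drop p).length = u.length - p := List.length_drop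
    have hlast' : u[u.length - 1]! ∈ u.drop p := by
      have h1 : (u.take p ++ u.drop p)[u.length - 1]! ∈ u.drop p :=
        getElem!_append_right_mem (by simp; omega) (by rw [hsplit]; omega)
      rwa [hsplit] at h1
    generalize u.take p = a at *
    generalize u.drop p = b at *
    subst hsplit
    have hbpos : ∀ x ∈ b, 0 < x := by
      rcases hsign with hs | hs
      · exact hs
      · exact absurd (hs _ hlast') hlast.not_gt
    have habs := hu.eq_oplus_iff.1 hdec
    have ha := hu.of_append_left habs
    have hv : IsPermW (sts b) := ⟨hu.sts_suffix, sign_of_mem_sts.1 hbpos⟩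
    have hne : sts b ≠ [] := List.length_pos_iff.1 (by rw [length_sts]; omega)
    obtain ⟨h1, h2, h3, h4⟩ := ih ha
    have hwne : w ≠ [] := List.length_pos_iff.1 (by omega)
    rw [hdec]
    generalize sts b = v at *
    refine ⟨?_, h2.oplus hv, ?_, h4.oplus_asc h2 hwne hv hne⟩
    · rw [length_oplus, length_oplus]; omega
    · rw [oplus, oplus, ← List.cons_append]
      refine OI.append_asc h3 (OI_map ?_) (lt_of_oplus h2 hv) ?_
      · intro x hx y hy
        rw [Int.sign_eq_one_of_pos (hv.2 x hx), Int.sign_eq_one_of_pos (hv.2 y hy)]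
        omega
      · intro x hx y hy
        have hy0 := (sign_shift v a.length).1 hv.2 y hy
        rcases List.mem_cons.1 hx with rfl | hx
        · exact hy0
        · have := abs_lt_of_oplus ha hv.1 x hx y hy
          rw [Int.abs_eq_natAbs, Int.abs_eq_natAbs] at this
          omega
  | neg u w p hp hdec hsign hlast _ ih =>
    intro hu
    have hsplit := List.take_append_drop p u
    have hdl : (u.drop p).length = u.length - p := List.length_drop
    have hlast' : u[u.length - 1]! ∈ u.drop p := by
      have h1 : (u.take p ++ u.drop p)[u.length - 1]! ∈ u.drop p :=
        getElem!_append_right_mem (by simp; omega) (by rw [hsplit]; omega)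
      rwa [hsplit] at h1
    rw [← hdl]
    generalize u.take p = a at *
    generalize u.drop p = b at *
    subst hsplit
    have hbneg : ∀ x ∈ b, x < 0 := by
      rcases hsign with hs | hs
      · exact absurd (hs _ hlast') hlast.not_gt
      · exact hs
    have habs := hu.eq_oplus_iff.1 hdec
    have ha := hu.of_append_left habs
    have hv := hu.sts_suffix
    have hneg := sign_of_mem_sts.2 hbneg
    obtain ⟨h1, h2, h3, h4⟩ := ih ha
    have hwne : w ≠ [] := List.length_pos_iff.1 (by omega)
    rw [hdec, ← length_sts b]
    have hvl : 0 < (sts b).length := by rw [length_sts]; omega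
    generalize sts b = v at *
    have hc := hv.isPermW_add hneg
    have e : (v.map (fun x => x + (v.length : ℤ) + 1)).map (fun x => x -
        ((v.map (fun x => x + (v.length : ℤ) + 1)).length : ℤ) - 1) = v := by
      rw [List.map_map]
      conv_rhs => rw [← List.map_id v]
      apply List.map_congr_left
      intro x _
      simp only [Function.comp, List.length_map, id]; ring
    have hne : v.map (fun x => x + (v.length : ℤ) + 1) ≠ [] :=
      List.length_pos_iff.1 (by rw [List.length_map]; omega)
    have key := h4.ominus_des h2 hwne hc hne
    rw [e] at key
    refine ⟨?_, h2.ominus hc, ?_, key⟩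
    · rw [length_oplus, length_ominus, List.length_map]; omega
    · rw [oplus, ominus, ← List.cons_append]
      refine OI.append_des (OI.trans ?_ h3) (OI_map ?_)
        (fun x hx y hy => lt_of_oplus hc h2 y hy x hx) ?_
      · conv => arg 2; rw [← List.map_id w]
        apply OI_map
        intro x hx y hy
        rw [Int.sign_eq_one_of_pos (h2.2 x hx), Int.sign_eq_one_of_pos (h2.2 y hy)]
        simp
      · intro x hx y hy
        rw [Int.sign_eq_neg_one_of_neg (hneg x hx), Int.sign_eq_neg_one_of_neg (hneg y hy)]
        omega
      · intro x hx y hy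
        have hy0 := (sign_shift v a.length).2 hneg y hy
        rcases List.mem_cons.1 hx with rfl | hx
        · exact hy0
        · have := abs_lt_of_oplus ha hv x hx y hy
          rw [Int.abs_eq_natAbs, Int.abs_eq_natAbs] at this
          omega

/-- A nonempty word whose sign changes increase the absolute value ends in a block `b` of constant
sign, all of whose absolute values exceed those of the rest `a`. The last clause carries the
induction: it records that `b` is preceded by a letter of the opposite sign. -/
theorem exists_last_block (u : List ℤ) (h0 : ∀ x ∈ u, x ≠ 0) (hm : Mixed u) (hne : u ≠ []) :
    ∃ a b, u = a ++ b ∧ b ≠ [] ∧ AllSameSign b ∧ (∀ x ∈ a, ∀ y ∈ b, |x| < |y|) ∧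
      ∀ x ∈ a, ∃ x' ∈ a, |x| ≤ |x'| ∧ ∀ y ∈ b, x' * y < 0 := by
  induction u using List.reverseRecOn with
  | nil => exact absurd rfl hne
  | append_singleton u c ih =>
    have hm' := hm
    unfold Mixed at hm'
    rw [List.pairwise_append] at hm'
    have hc0 : c ≠ 0 := h0 c (by simp)
    have hlt : ∀ x ∈ u, x * c < 0 → |x| < |c| := by
      intro x hx hxc
      have h1 := hm'.2.2 x hx c (by simp)
      rw [Int.abs_eq_natAbs, Int.abs_eq_natAbs]
      rcases mul_neg_iff.1 hxc with h | h <;> omega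
    rcases eq_or_ne u [] with rfl | hu
    · refine ⟨[], [c], by simp, by simp, ?_, by simp, by simp⟩
      rcases lt_or_gt_of_ne hc0 with h | h
      · exact Or.inr (by simpa using h)
      · exact Or.inl (by simpa using h)
    · obtain ⟨a, b, rfl, hb, hs, hab, hopp⟩ := ih (fun x hx => h0 x (by simp [hx])) hm'.1 hu
      obtain ⟨b0, hb0⟩ := List.exists_mem_of_ne_nil b hb
      -- `c` either continues the block `b` or, having the opposite sign, starts a new one
      by_cases hsame : 0 < b0 * c
      · have hsc : ∀ y ∈ b, ∀ x, x * y < 0 → x * c < 0 := by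
          intro y hy x hxy
          rcases hs with hs | hs
          · have h1 := hs y hy
            have h2 := hs b0 hb0
            have h3 : 0 < c := pos_of_mul_pos_right hsame h2.le
            have h4 : x < 0 := neg_of_mul_neg_left hxy h1.le
            exact mul_neg_of_neg_of_pos h4 h3
          · have h1 := hs y hy
            have h2 := hs b0 hb0
            have h3 : c < 0 := neg_of_mul_pos_right hsame h2.le
            have h4 : 0 < x := pos_of_mul_neg_left hxy h1.le
            exact mul_neg_of_pos_of_neg h4 h3
        refine ⟨a, b ++ [c], by simp, by simp, ?_, ?_, ?_⟩
        · rcases hs with hs | hs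
          · left
            have h3 : 0 < c := pos_of_mul_pos_right hsame (hs b0 hb0).le
            intro x hx
            rcases List.mem_append.1 hx with hx | hx
            · exact hs x hx
            · simp at hx; omega
          · right
            have h3 : c < 0 := neg_of_mul_pos_right hsame (hs b0 hb0).le
            intro x hx
            rcases List.mem_append.1 hx with hx | hx
            · exact hs x hx
            · simp at hx; omega
        · intro x hx y hy
          rcases List.mem_append.1 hy with hy | hy
          · exact hab x hx y hy
          · rw [List.mem_singleton.1 hy]
            obtain ⟨x', hx', h1, h2⟩ := hopp x hx
            exact h1.trans_lt (hlt x' (by simp [hx']) (hsc b0 hb0 x' (h2 b0 hb0)))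
        · intro x hx
          obtain ⟨x', hx', h1, h2⟩ := hopp x hx
          refine ⟨x', hx', h1, fun y hy => ?_⟩
          rcases List.mem_append.1 hy with hy | hy
          · exact h2 y hy
          · rw [List.mem_singleton.1 hy]
            exact hsc b0 hb0 x' (h2 b0 hb0)
      · have hbc : ∀ y ∈ b, y * c < 0 := by
          have hb00 : b0 ≠ 0 := h0 b0 (by simp [hb0])
          have hbc0 : b0 * c < 0 := lt_of_le_of_ne (not_lt.1 hsame) (mul_ne_zero hb00 hc0)
          intro y hy
          rcases hs with hs | hs
          · have h1 : c < 0 := neg_of_mul_neg_right hbc0 (hs b0 hb0).le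
            exact mul_neg_of_pos_of_neg (hs y hy) h1
          · have h1 : 0 < c := pos_of_mul_neg_right hbc0 (hs b0 hb0).le
            exact mul_neg_of_neg_of_pos (hs y hy) h1
        have hdom : ∀ x ∈ a ++ b, ∃ x' ∈ b, |x| ≤ |x'| := by
          intro x hx
          rcases List.mem_append.1 hx with hx | hx
          · exact ⟨b0, hb0, (hab x hx b0 hb0).le⟩
          · exact ⟨x, hx, le_rfl⟩
        refine ⟨a ++ b, [c], rfl, by simp, ?_, ?_, ?_⟩
        · rcases lt_or_gt_of_ne hc0 with h | h
          · exact Or.inr (by simpa using h)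
          · exact Or.inl (by simpa using h)
        · intro x hx y hy
          rw [List.mem_singleton.1 hy]
          obtain ⟨x', hx', h1⟩ := hdom x hx
          exact h1.trans_lt (hlt x' (by simp [hx']) (hbc x' hx'))
        · intro x hx
          obtain ⟨x', hx', h1⟩ := hdom x hx
          exact ⟨x', by simp [hx'], h1, fun y hy => by
            rw [List.mem_singleton.1 hy]; exact hbc x' hx'⟩

/-- Existence of `ψ(u)`, by splitting off the last block of constant sign. -/
theorem exists_psi (n : ℕ) : ∀ u : List ℤ, u.length = n → IsSignedPerm u → Mixed u →
    ∃ w, PsiRel u w := by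
  induction n using Nat.strong_induction_on with
  | _ n ih =>
    intro u hn hu hm
    rcases eq_or_ne u [] with rfl | hne
    · exact ⟨_, PsiRel.base⟩
    · obtain ⟨a, b, rfl, hb, hs, hab, -⟩ := exists_last_block u hu.ne_zero hm hne
      have hbl := length_pos' hb
      rw [List.length_append] at hn
      obtain ⟨w, hw⟩ := ih a.length (by omega) a rfl (hu.of_append_left hab)
        (List.Pairwise.sublist (List.sublist_append_left a b) hm)
      have hv := hu.sts_suffix
      have hvne : sts b ≠ [] := List.length_pos_iff.1 (by rw [length_sts]; omega)
      rw [hu.eq_oplus_iff.2 hab]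
      rcases hs with hs | hs
      · exact ⟨_, hw.oplus_pos ⟨hv, sign_of_mem_sts.1 hs⟩ hvne⟩
      · exact ⟨_, hw.oplus_neg hv (sign_of_mem_sts.2 hs) hvne⟩

/-! ### Recovering `u` from the order type of `0u` -/

theorem sts_congr {z : List (ℤ × ℤ)} (hs : ∀ p ∈ z, p.1.sign = p.2.sign)
    (h : ∀ p ∈ z, ∀ q ∈ z, (|p.1| < |q.1| ↔ |p.2| < |q.2|)) :
    sts (z.map Prod.fst) = sts (z.map Prod.snd) := by
  unfold sts
  rw [List.map_map, List.map_map]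
  apply List.map_congr_left
  intro p hp
  simp only [Function.comp, List.filter_map, List.length_map]
  rw [hs p hp]
  congr 4
  apply List.filter_congr
  intro q hq
  simp [h q hq p hp]

/-- A signed permutation avoiding `(-2)1` and `2(-1)` is determined by the order type of `0u`:
the letter `0` gives the signs, and the absolute values of letters of opposite sign are ordered
as their positions. -/
theorem eq_of_OI_cons_zero {u u' : List ℤ} (hu : IsSignedPerm u) (hu' : IsSignedPerm u')
    (hm : Mixed u) (hm' : Mixed u') (h : OI (0 :: u) (0 :: u')) : u = u' := by
  obtain ⟨z, h1, h2, h⟩ := h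
  rcases z with _ | ⟨p0, z⟩
  · simp at h1
  obtain ⟨x0, y0⟩ := p0
  simp only [List.map_cons, List.cons.injEq] at h1 h2
  obtain ⟨rfl, rfl⟩ := h1
  obtain ⟨rfl, rfl⟩ := h2
  have hz : ∀ p ∈ z, ∀ q ∈ z, (p.1 < q.1 ↔ p.2 < q.2) := fun p hp q hq =>
    h p (by simp [hp]) q (by simp [hq])
  have hsgn : ∀ p ∈ z, (p.1 < 0 ↔ p.2 < 0) ∧ (0 < p.1 ↔ 0 < p.2) := fun p hp =>
    ⟨h p (by simp [hp]) (0, 0) (by simp), h (0, 0) (by simp) p (by simp [hp])⟩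
  rw [← hu.sts_eq, ← hu'.sts_eq]
  apply sts_congr
  · intro p hp
    have := hsgn p hp
    rcases lt_trichotomy p.1 0 with h3 | h3 | h3
    · rw [Int.sign_eq_neg_one_of_neg h3, Int.sign_eq_neg_one_of_neg (this.1.1 h3)]
    · rw [h3, show p.2 = 0 by omega]
    · rw [Int.sign_eq_one_of_pos h3, Int.sign_eq_one_of_pos (this.2.1 h3)]
  · unfold Mixed at hm hm'
    rw [List.pairwise_map] at hm hm'
    have hpair := hm.and hm'
    have key : z.Pairwise (fun p q => (|p.1| < |q.1| ↔ |p.2| < |q.2|) ∧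
        (|q.1| < |p.1| ↔ |q.2| < |p.2|)) := by
      refine List.Pairwise.imp_of_mem ?_ hpair
      intro p q hp hq hpq
      have e1 := hsgn p hp
      have e2 := hsgn q hq
      have e3 := hz p hp q hq
      have e4 := hz q hq p hp
      have e5 := hu.ne_zero p.1 (List.mem_map_of_mem hp)
      have e6 := hu.ne_zero q.1 (List.mem_map_of_mem hq)
      simp only [Int.abs_eq_natAbs]
      omega
    intro p hp q hq
    have hsymm : Std.Symm (fun p q : ℤ × ℤ => (|p.1| < |q.1| ↔ |p.2| < |q.2|) ∧
        (|q.1| < |p.1| ↔ |q.2| < |p.2|)) := ⟨fun _ _ h => ⟨h.2, h.1⟩⟩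
    exact (key.forall_of_forall (fun _ _ => by simp) hp hq).1

/-! ### Pattern avoidance of `u` in terms of `0u` -/

/-- `w` contains the pattern `3142`. -/
def Has3142 (w : List ℤ) : Prop :=
  ∃ a b c d, [a, b, c, d].Sublist w ∧ b < d ∧ d < a ∧ a < c

/-- `w` contains the pattern `2413`. -/
def Has2413 (w : List ℤ) : Prop :=
  ∃ a b c d, [a, b, c, d].Sublist w ∧ c < a ∧ a < d ∧ d < b

theorem OI.sublist_four {w w' : List ℤ} (h : OI w w') {a b c d : ℤ}
    (hs : [a, b, c, d].Sublist w) : ∃ a' b' c' d', [a', b', c', d'].Sublist w' ∧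
      (b < d ↔ b' < d') ∧ (d < a ↔ d' < a') ∧ (a < c ↔ a' < c') ∧
      (c < a ↔ c' < a') ∧ (a < d ↔ a' < d') ∧ (d < b ↔ d' < b') := by
  obtain ⟨z, rfl, rfl, h⟩ := h
  obtain ⟨l, hl, e⟩ := List.sublist_map_iff.1 hs
  have hlen := congrArg List.length e
  simp only [List.length_cons, List.length_nil, List.length_map] at hlen
  obtain ⟨p, q, r, s, rfl⟩ := List.length_eq_four.1 hlen.symm
  simp only [List.map_cons, List.map_nil, List.cons.injEq, and_true] at e
  obtain ⟨rfl, rfl, rfl, rfl⟩ := e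
  have hm : ∀ x ∈ [p, q, r, s], x ∈ z := fun x hx => hl.subset hx
  have hp := hm p (by simp)
  have hq := hm q (by simp)
  have hr := hm r (by simp)
  have hs := hm s (by simp)
  refine ⟨p.2, q.2, r.2, s.2, ?_, h _ hq _ hs, h _ hs _ hp, h _ hp _ hr, h _ hr _ hp,
    h _ hp _ hs, h _ hs _ hq⟩
  simpa using hl.map Prod.snd

theorem Has3142.of_OI {w w' : List ℤ} (h : OI w w') (hw : Has3142 w) : Has3142 w' := by
  obtain ⟨a, b, c, d, hs, h1, h2, h3⟩ := hw
  obtain ⟨a', b', c', d', hs', e1, e2, e3, -⟩ := h.sublist_four hs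
  exact ⟨a', b', c', d', hs', e1.1 h1, e2.1 h2, e3.1 h3⟩

theorem Has2413.of_OI {w w' : List ℤ} (h : OI w w') (hw : Has2413 w) : Has2413 w' := by
  obtain ⟨a, b, c, d, hs, h1, h2, h3⟩ := hw
  obtain ⟨a', b', c', d', hs', -, -, -, e1, e2, e3⟩ := h.sublist_four hs
  exact ⟨a', b', c', d', hs', e1.1 h1, e2.1 h2, e3.1 h3⟩

theorem containsA_iff {w : List ℤ} : (ContainsA w [3, 1, 4, 2] ↔ Has3142 w) ∧
    (ContainsA w [2, 4, 1, 3] ↔ Has2413 w) := by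
  have fwd : ∀ {s : List ℤ} {A B C D : ℤ}, st s = [A, B, C, D] → ∃ a b c d, s = [a, b, c, d] ∧
      (B < D → b < d) ∧ (D < A → d < a) ∧ (A < C → a < c) ∧
      (C < A → c < a) ∧ (A < D → a < d) ∧ (D < B → d < b) := by
    intro s A B C D hs
    have hl := congrArg List.length hs
    rw [length_st] at hl
    obtain ⟨a, b, c, d, rfl⟩ := List.length_eq_four.1 hl
    simp only [st, List.map_cons, List.map_nil, List.cons.injEq, and_true] at hs
    obtain ⟨h1, h2, h3, h4⟩ := hs
    have key := fun x y hx hy => (rank_lt_iff [a, b, c, d] id (x := x) (y := y) hx hy).1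
    simp only [id] at key
    refine ⟨a, b, c, d, rfl, fun h => ?_, fun h => ?_, fun h => ?_, fun h => ?_, fun h => ?_,
      fun h => ?_⟩ <;> exact key _ _ (by simp) (by simp) (by omega)
  have bwd : ∀ {a b c d A B C D : ℤ}, IsPermW [A, B, C, D] →
      (∀ p ∈ [(a, A), (b, B), (c, C), (d, D)], ∀ q ∈ [(a, A), (b, B), (c, C), (d, D)],
        (p.1 < q.1 ↔ p.2 < q.2)) → st [a, b, c, d] = [A, B, C, D] := by
    intro a b c d A B C D hP h
    have : OI [a, b, c, d] [A, B, C, D] := ⟨_, rfl, rfl, h⟩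
    rw [this.st_eq, hP.st_eq]
  constructor
  · constructor
    · rintro ⟨s, hs, h⟩
      obtain ⟨a, b, c, d, rfl, h1, h2, h3, -⟩ := fwd h
      exact ⟨a, b, c, d, hs, h1 (by decide), h2 (by decide), h3 (by decide)⟩
    · rintro ⟨a, b, c, d, hs, h1, h2, h3⟩
      refine ⟨_, hs, bwd ⟨by unfold IsSignedPerm; decide, by decide⟩ ?_⟩
      simp; omega
  · constructor
    · rintro ⟨s, hs, h⟩
      obtain ⟨a, b, c, d, rfl, -, -, -, h1, h2, h3⟩ := fwd h
      exact ⟨a, b, c, d, hs, h1 (by decide), h2 (by decide), h3 (by decide)⟩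
    · rintro ⟨a, b, c, d, hs, h1, h2, h3⟩
      refine ⟨_, hs, bwd ⟨by unfold IsSignedPerm; decide, by decide⟩ ?_⟩
      simp; omega

theorem isSepA_iff {w : List ℤ} : IsSepA w ↔ IsPermW w ∧ ¬ Has3142 w ∧ ¬ Has2413 w := by
  rw [IsSepA, containsA_iff.1, containsA_iff.2, IsPermW, and_assoc]

/-- Sign and absolute value of a letter of `sts`, which has the form `sgn(x) (k + 1)`. -/
theorem sign_mul_eq {x A : ℤ} {k : ℕ} (h : x.sign * ((k : ℤ) + 1) = A) :
    (0 < A → 0 < x ∧ (k : ℤ) + 1 = A) ∧ (A < 0 → x < 0 ∧ (k : ℤ) + 1 = -A) := by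
  rcases lt_trichotomy x 0 with h1 | h1 | h1
  · rw [Int.sign_eq_neg_one_of_neg h1] at h; omega
  · rw [h1, Int.sign_zero] at h; omega
  · rw [Int.sign_eq_one_of_pos h1] at h; omega

theorem natAbs_rank_lt {s : List ℤ} {x y : ℤ} (hx : x ∈ s) (hy : y ∈ s)
    (h : (s.filter (fun z => decide (|z| < |x|))).length <
      (s.filter (fun z => decide (|z| < |y|))).length) : x.natAbs < y.natAbs := by
  have := (rank_lt_iff s abs hx hy).1 h
  rw [Int.abs_eq_natAbs, Int.abs_eq_natAbs] at this
  omega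

theorem sts_eq_of_pairs {A : List ℤ} (hA : IsSignedPerm A) (z : List (ℤ × ℤ))
    (hz : z.map Prod.snd = A)
    (hs : ∀ p ∈ z, (0 < p.1 ∧ 0 < p.2) ∨ (p.1 < 0 ∧ p.2 < 0))
    (h : ∀ p ∈ z, ∀ q ∈ z, (p.1.natAbs < q.1.natAbs ↔ p.2.natAbs < q.2.natAbs)) :
    sts (z.map Prod.fst) = A := by
  rw [← hA.sts_eq, ← hz]
  apply sts_congr
  · intro p hp
    rcases hs p hp with h | h
    · rw [Int.sign_eq_one_of_pos h.1, Int.sign_eq_one_of_pos h.2]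
    · rw [Int.sign_eq_neg_one_of_neg h.1, Int.sign_eq_neg_one_of_neg h.2]
  · intro p hp q hq
    have := h p hp q hq
    simp only [Int.abs_eq_natAbs]
    omega

theorem containsB_two {w : List ℤ} :
    (ContainsB w [-2, 1] ↔ ∃ x y, [x, y].Sublist w ∧ x < 0 ∧ 0 < y ∧ y < -x) ∧
    (ContainsB w [2, -1] ↔ ∃ x y, [x, y].Sublist w ∧ 0 < x ∧ y < 0 ∧ -y < x) := by
  constructor
  · constructor
    · rintro ⟨s, hs, h⟩
      have hl := congrArg List.length h
      rw [length_sts] at hl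
      obtain ⟨x, y, rfl⟩ := List.length_eq_two.1 hl
      simp only [sts, List.map_cons, List.map_nil, List.cons.injEq, and_true] at h
      obtain ⟨h1, h2⟩ := h
      have e1 := (sign_mul_eq h1).2 (by decide)
      have e2 := (sign_mul_eq h2).1 (by decide)
      have := natAbs_rank_lt (s := [x, y]) (x := y) (y := x) (by simp) (by simp) (by omega)
      exact ⟨x, y, hs, by omega, by omega, by omega⟩
    · rintro ⟨x, y, hs, h1, h2, h3⟩
      refine ⟨_, hs, sts_eq_of_pairs (by unfold IsSignedPerm; decide) [(x, -2), (y, 1)] rfl ?_ ?_⟩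
      · simp; omega
      · simp; omega
  · constructor
    · rintro ⟨s, hs, h⟩
      have hl := congrArg List.length h
      rw [length_sts] at hl
      obtain ⟨x, y, rfl⟩ := List.length_eq_two.1 hl
      simp only [sts, List.map_cons, List.map_nil, List.cons.injEq, and_true] at h
      obtain ⟨h1, h2⟩ := h
      have e1 := (sign_mul_eq h1).1 (by decide)
      have e2 := (sign_mul_eq h2).2 (by decide)
      have := natAbs_rank_lt (s := [x, y]) (x := y) (y := x) (by simp) (by simp) (by omega)
      exact ⟨x, y, hs, by omega, by omega, by omega⟩
    · rintro ⟨x, y, hs, h1, h2, h3⟩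
      refine ⟨_, hs, sts_eq_of_pairs (by unfold IsSignedPerm; decide) [(x, 2), (y, -1)] rfl ?_ ?_⟩
      · simp; omega
      · simp; omega

theorem containsB_four {w : List ℤ} :
    (ContainsB w [3, 1, 4, 2] ↔
      ∃ a b c d, [a, b, c, d].Sublist w ∧ 0 < b ∧ b < d ∧ d < a ∧ a < c) ∧
    (ContainsB w [2, 4, 1, 3] ↔
      ∃ a b c d, [a, b, c, d].Sublist w ∧ 0 < c ∧ c < a ∧ a < d ∧ d < b) ∧
    (ContainsB w [-3, -1, -4, -2] ↔
      ∃ a b c d, [a, b, c, d].Sublist w ∧ b < 0 ∧ c < a ∧ a < d ∧ d < b) ∧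
    (ContainsB w [-2, -4, -1, -3] ↔
      ∃ a b c d, [a, b, c, d].Sublist w ∧ c < 0 ∧ b < d ∧ d < a ∧ a < c) := by
  have fwd : ∀ {s : List ℤ} {A B C D : ℤ}, sts s = [A, B, C, D] → ∃ a b c d, s = [a, b, c, d] ∧
      ((0 < A ∧ 0 < B ∧ 0 < C ∧ 0 < D) → (0 < a ∧ 0 < b ∧ 0 < c ∧ 0 < d) ∧
        (B < D → b < d) ∧ (D < A → d < a) ∧ (A < C → a < c) ∧
        (C < A → c < a) ∧ (A < D → a < d) ∧ (D < B → d < b)) ∧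
      ((A < 0 ∧ B < 0 ∧ C < 0 ∧ D < 0) → (a < 0 ∧ b < 0 ∧ c < 0 ∧ d < 0) ∧
        (B < D → b < d) ∧ (D < A → d < a) ∧ (A < C → a < c) ∧
        (C < A → c < a) ∧ (A < D → a < d) ∧ (D < B → d < b)) := by
    intro s A B C D hs
    have hl := congrArg List.length hs
    rw [length_sts] at hl
    obtain ⟨a, b, c, d, rfl⟩ := List.length_eq_four.1 hl
    simp only [sts, List.map_cons, List.map_nil, List.cons.injEq, and_true] at hs
    obtain ⟨h1, h2, h3, h4⟩ := hs
    have e1 := sign_mul_eq h1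
    have e2 := sign_mul_eq h2
    have e3 := sign_mul_eq h3
    have e4 := sign_mul_eq h4
    have key := fun x y hx hy => natAbs_rank_lt (s := [a, b, c, d]) (x := x) (y := y) hx hy
    have k1 := key b d (by simp) (by simp)
    have k2 := key d a (by simp) (by simp)
    have k3 := key a c (by simp) (by simp)
    have k4 := key c a (by simp) (by simp)
    have k5 := key a d (by simp) (by simp)
    have k6 := key d b (by simp) (by simp)
    have k1' := key d b (by simp) (by simp)
    have k2' := key a d (by simp) (by simp)
    refine ⟨a, b, c, d, rfl, ?_, ?_⟩
    · rintro ⟨p1, p2, p3, p4⟩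
      have f1 := e1.1 p1
      have f2 := e2.1 p2
      have f3 := e3.1 p3
      have f4 := e4.1 p4
      clear e1 e2 e3 e4
      refine ⟨⟨f1.1, f2.1, f3.1, f4.1⟩, ?_, ?_, ?_, ?_, ?_, ?_⟩
      · intro h; have := k1 (by omega); omega
      · intro h; have := k2 (by omega); omega
      · intro h; have := k3 (by omega); omega
      · intro h; have := k4 (by omega); omega
      · intro h; have := k5 (by omega); omega
      · intro h; have := k6 (by omega); omega
    · rintro ⟨p1, p2, p3, p4⟩
      have f1 := e1.2 p1
      have f2 := e2.2 p2
      have f3 := e3.2 p3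
      have f4 := e4.2 p4
      clear e1 e2 e3 e4
      refine ⟨⟨f1.1, f2.1, f3.1, f4.1⟩, ?_, ?_, ?_, ?_, ?_, ?_⟩
      · intro h; have := k6 (by omega); omega
      · intro h; have := k5 (by omega); omega
      · intro h; have := k4 (by omega); omega
      · intro h; have := k3 (by omega); omega
      · intro h; have := k2 (by omega); omega
      · intro h; have := k1 (by omega); omega
  refine ⟨⟨?_, ?_⟩, ⟨?_, ?_⟩, ⟨?_, ?_⟩, ⟨?_, ?_⟩⟩
  · rintro ⟨s, hs, h⟩
    obtain ⟨a, b, c, d, rfl, e, -⟩ := fwd h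
    have e := e (by decide)
    exact ⟨a, b, c, d, hs, by omega⟩
  · rintro ⟨a, b, c, d, hs, h0, h1, h2, h3⟩
    refine ⟨_, hs, sts_eq_of_pairs (by unfold IsSignedPerm; decide)
      [(a, 3), (b, 1), (c, 4), (d, 2)] rfl ?_ ?_⟩
    · simp; omega
    · simp; omega
  · rintro ⟨s, hs, h⟩
    obtain ⟨a, b, c, d, rfl, e, -⟩ := fwd h
    have e := e (by decide)
    exact ⟨a, b, c, d, hs, by omega⟩
  · rintro ⟨a, b, c, d, hs, h0, h1, h2, h3⟩
    refine ⟨_, hs, sts_eq_of_pairs (by unfold IsSignedPerm; decide)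
      [(a, 2), (b, 4), (c, 1), (d, 3)] rfl ?_ ?_⟩
    · simp; omega
    · simp; omega
  · rintro ⟨s, hs, h⟩
    obtain ⟨a, b, c, d, rfl, -, e⟩ := fwd h
    have e := e (by decide)
    exact ⟨a, b, c, d, hs, by omega⟩
  · rintro ⟨a, b, c, d, hs, h0, h1, h2, h3⟩
    refine ⟨_, hs, sts_eq_of_pairs (by unfold IsSignedPerm; decide)
      [(a, -3), (b, -1), (c, -4), (d, -2)] rfl ?_ ?_⟩
    · simp; omega
    · simp; omega
  · rintro ⟨s, hs, h⟩
    obtain ⟨a, b, c, d, rfl, -, e⟩ := fwd h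
    have e := e (by decide)
    exact ⟨a, b, c, d, hs, by omega⟩
  · rintro ⟨a, b, c, d, hs, h0, h1, h2, h3⟩
    refine ⟨_, hs, sts_eq_of_pairs (by unfold IsSignedPerm; decide)
      [(a, -2), (b, -4), (c, -1), (d, -3)] rfl ?_ ?_⟩
    · simp; omega
    · simp; omega

/-- For a signed permutation `u` avoiding `(-2)1` and `2(-1)`, an occurrence of `3142` or `2413`
in `0u` cannot use the letter `0` and its letters have the same sign. -/
theorem has_cons_zero {u : List ℤ} (hm : Mixed u) (h0 : ∀ x ∈ u, x ≠ 0) :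
    (Has3142 (0 :: u) ↔ ContainsB u [3, 1, 4, 2] ∨ ContainsB u [-2, -4, -1, -3]) ∧
    (Has2413 (0 :: u) ↔ ContainsB u [2, 4, 1, 3] ∨ ContainsB u [-3, -1, -4, -2]) := by
  have hm0 : Mixed (0 :: u) := List.pairwise_cons.2 ⟨fun y hy => by omega, hm⟩
  obtain ⟨c1, c2, c3, c4⟩ := @containsB_four u
  rw [c1, c2, c3, c4]
  have aux : ∀ {a b c d : ℤ}, [a, b, c, d].Sublist (0 :: u) →
      (a = 0 ∨ (a ≠ 0 ∧ [a, b, c, d].Sublist u)) ∧ b ≠ 0 ∧ c ≠ 0 ∧ d ≠ 0 := by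
    intro a b c d hs
    rcases List.sublist_cons_iff.1 hs with h | ⟨r, hr, h⟩
    · exact ⟨Or.inr ⟨h0 a (h.subset (by simp)), h⟩, h0 b (h.subset (by simp)),
        h0 c (h.subset (by simp)), h0 d (h.subset (by simp))⟩
    · simp only [List.cons.injEq] at hr
      obtain ⟨rfl, rfl⟩ := hr
      exact ⟨Or.inl rfl, h0 b (h.subset (by simp)),
        h0 c (h.subset (by simp)), h0 d (h.subset (by simp))⟩
  refine ⟨⟨?_, ?_⟩, ⟨?_, ?_⟩⟩
  · rintro ⟨a, b, c, d, hs, h1, h2, h3⟩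
    obtain ⟨ha, hb, hc, hd⟩ := aux hs
    have hpw := hm0.sublist hs
    simp only [List.pairwise_cons, List.mem_cons, List.not_mem_nil, or_false, forall_eq_or_imp,
      forall_eq] at hpw
    rcases ha with ha | ⟨ha, hsu⟩
    · omega
    · by_cases hb0 : 0 < b
      · exact Or.inl ⟨a, b, c, d, hsu, by omega⟩
      · exact Or.inr ⟨a, b, c, d, hsu, by omega⟩
  · rintro (⟨a, b, c, d, hs, h⟩ | ⟨a, b, c, d, hs, h⟩)
    · exact ⟨a, b, c, d, hs.cons 0, by omega⟩
    · exact ⟨a, b, c, d, hs.cons 0, by omega⟩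
  · rintro ⟨a, b, c, d, hs, h1, h2, h3⟩
    obtain ⟨ha, hb, hc, hd⟩ := aux hs
    have hpw := hm0.sublist hs
    simp only [List.pairwise_cons, List.mem_cons, List.not_mem_nil, or_false, forall_eq_or_imp,
      forall_eq] at hpw
    rcases ha with ha | ⟨ha, hsu⟩
    · omega
    · by_cases hb0 : 0 < c
      · exact Or.inl ⟨a, b, c, d, hsu, by omega⟩
      · exact Or.inr ⟨a, b, c, d, hsu, by omega⟩
  · rintro (⟨a, b, c, d, hs, h⟩ | ⟨a, b, c, d, hs, h⟩)
    · exact ⟨a, b, c, d, hs.cons 0, by omega⟩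
    · exact ⟨a, b, c, d, hs.cons 0, by omega⟩

theorem mixed_iff {u : List ℤ} (hu : IsSignedPerm u) :
    Mixed u ↔ ¬ ContainsB u [-2, 1] ∧ ¬ ContainsB u [2, -1] := by
  rw [containsB_two.1, containsB_two.2]
  constructor
  · intro hm
    constructor
    · rintro ⟨x, y, hs, h⟩
      have := List.Pairwise.forall_sublist hm hs
      omega
    · rintro ⟨x, y, hs, h⟩
      have := List.Pairwise.forall_sublist hm hs
      omega
  · rintro ⟨h1, h2⟩
    apply List.pairwise_of_forall_sublist
    intro x y hs
    have hx := hu.ne_zero x (hs.subset (by simp))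
    have hy := hu.ne_zero y (hs.subset (by simp))
    have hne : x.natAbs ≠ y.natAbs := by
      have := ((isSignedPerm_iff u).1 hu).1.sublist (hs.map Int.natAbs)
      simpa using this
    constructor
    · intro hx0 hy0
      by_contra h
      exact h1 ⟨x, y, hs, by omega⟩
    · intro hx0 hy0
      by_contra h
      exact h2 ⟨x, y, hs, by omega⟩

/-- Separability of `u` in terms of `0u`: together with `isSepA_iff` it shows that `u` is separable
if and only if it satisfies `Mixed` and `st(0u)` is separable. -/
theorem isSepB_iff {u : List ℤ} : IsSepB u ↔
    IsSignedPerm u ∧ Mixed u ∧ ¬ Has3142 (0 :: u) ∧ ¬ Has2413 (0 :: u) := by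
  constructor
  · rintro ⟨hu, h1, h2, h3, h4, h5, h6⟩
    have hm := (mixed_iff hu).2 ⟨h1, h2⟩
    have := has_cons_zero hm hu.ne_zero
    refine ⟨hu, hm, ?_⟩
    rw [this.1, this.2]
    tauto
  · rintro ⟨hu, hm, h1, h2⟩
    have := has_cons_zero hm hu.ne_zero
    have h := (mixed_iff hu).1 hm
    rw [this.1] at h1
    rw [this.2] at h2
    unfold IsSepB
    tauto

/-! ### Existence: separable permutations of the form `st(0u)` -/

/-- The order of the absolute values `|φ(w)_i|` for `w = c t`, read off from `w`. A letter of `t`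
is given as a pair (value, position). Letters on the same side of `c` are compared by their
distance to `c`, letters on different sides by their positions. -/
def Prec (c : ℤ) (p q : ℤ × ℕ) : Prop :=
  (c < p.1 ∧ c < q.1 ∧ p.1 < q.1) ∨ (p.1 < c ∧ q.1 < c ∧ q.1 < p.1) ∨
    (((c < p.1 ∧ q.1 < c) ∨ (p.1 < c ∧ c < q.1)) ∧ p.2 < q.2)

instance (c : ℤ) (p q : ℤ × ℕ) : Decidable (Prec c p q) := by unfold Prec; infer_instance

theorem pairwise_zipIdx (t : List ℤ) : t.zipIdx.Pairwise (fun p q => p.2 < q.2) := by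
  have h : (t.zipIdx.map Prod.snd).Pairwise (· < ·) := by
    rw [List.zipIdx_map_snd]; exact List.pairwise_lt_range'
  exact List.pairwise_map.1 h

theorem sublist_of_zipIdx {t : List ℤ} {p q r : ℤ × ℕ} (hp : p ∈ t.zipIdx) (hq : q ∈ t.zipIdx)
    (hr : r ∈ t.zipIdx) (h1 : p.2 < q.2) (h2 : q.2 < r.2) : [p.1, q.1, r.1].Sublist t := by
  have hs : [p, q, r].Sublist t.zipIdx := by
    have ha : Std.Antisymm (fun p q : ℤ × ℕ => p.2 < q.2) := ⟨fun p q h h' => by omega⟩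
    refine List.sublist_of_subperm_of_pairwise (r := fun p q : ℤ × ℕ => p.2 < q.2) ?_ ?_
      (pairwise_zipIdx t)
    · apply List.subperm_of_subset
      · have e1 : p ≠ q := fun h => by rw [h] at h1; omega
        have e2 : q ≠ r := fun h => by rw [h] at h2; omega
        have e3 : p ≠ r := fun h => by rw [h] at h1; omega
        simp [e1, e2, e3]
      · intro x hx
        simp only [List.mem_cons, List.not_mem_nil, or_false] at hx
        rcases hx with rfl | rfl | rfl <;> assumption
    · simp; omega
  have := hs.map Prod.fst
  rwa [List.zipIdx_map_fst] at this

/-- Transitivity of `Prec` is where separability enters: a cyclic triple gives an occurrence of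
`3142` or `2413` starting with the first letter `c`. -/
theorem Prec.trans' {c : ℤ} {t : List ℤ} (hc : c ∉ t) (ht : t.Nodup) (h1 : ¬ Has3142 (c :: t))
    (h2 : ¬ Has2413 (c :: t)) {p q r : ℤ × ℕ} (hp : p ∈ t.zipIdx) (hq : q ∈ t.zipIdx)
    (hr : r ∈ t.zipIdx) (hpq : Prec c p q) (hqr : Prec c q r) : Prec c p r := by
  have hne : ∀ p ∈ t.zipIdx, p.1 ≠ c := by
    intro p hp h
    exact hc (h ▸ List.fst_mem_of_mem_zipIdx hp)
  have hval : ∀ p ∈ t.zipIdx, ∀ q ∈ t.zipIdx, p.2 = q.2 → p.1 = q.1 := by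
    intro p hp q hq h
    rw [List.mem_zipIdx_iff_getElem?] at hp hq
    rw [h, hq] at hp
    exact (Option.some.inj hp).symm
  have nopat : ∀ p ∈ t.zipIdx, ∀ q ∈ t.zipIdx, ∀ r ∈ t.zipIdx, p.2 < q.2 → q.2 < r.2 →
      ¬ (p.1 < r.1 ∧ r.1 < c ∧ c < q.1) ∧ ¬ (q.1 < c ∧ c < r.1 ∧ r.1 < p.1) := by
    intro p hp q hq r hr hpq hqr
    have hs := (sublist_of_zipIdx hp hq hr hpq hqr).cons_cons c
    exact ⟨fun h => h1 ⟨_, _, _, _, hs, h⟩, fun h => h2 ⟨_, _, _, _, hs, h⟩⟩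
  have hinj : p.1 = r.1 → p.2 = r.2 := by
    have hn : (t.zipIdx.map Prod.fst).Nodup := by rwa [List.zipIdx_map_fst]
    exact fun h => congrArg Prod.snd (List.inj_on_of_nodup_map hn hp hr h)
  have n1 := hne p hp
  have n2 := hne q hq
  have n3 := hne r hr
  have v1 := hval p hp q hq
  have v2 := hval q hq r hr
  have v3 := hval p hp r hr
  have m1 := nopat p hp q hq r hr
  have m2 := nopat p hp r hr q hq
  have m3 := nopat q hq p hp r hr
  have m4 := nopat q hq r hr p hp
  have m5 := nopat r hr p hp q hq
  have m6 := nopat r hr q hq p hp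
  clear hne hval nopat hp hq hr h1 h2 hc ht
  unfold Prec at *
  -- fix the sides of `c` on which the three letters lie
  rcases lt_or_gt_of_ne n1 with n1 | n1 <;> rcases lt_or_gt_of_ne n2 with n2 | n2 <;>
    rcases lt_or_gt_of_ne n3 with n3 | n3 <;>
    simp only [gt_iff_lt, n1, n2, n3, n1.not_gt, n2.not_gt, n3.not_gt, true_and, and_true, false_and,
      and_false, false_or, or_false, or_self, or_true, not_false_eq_true,
      not_lt] at hpq hqr m1 m2 m3 m4 m5 m6 ⊢ <;> omega

/-- Construction of the word `u` with `0u` order isomorphic to a given separable word `ct`: the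
absolute values are the ranks in the total order `Prec c`. -/
theorem exists_word {c : ℤ} {t : List ℤ} (hc : c ∉ t) (ht : t.Nodup) (h1 : ¬ Has3142 (c :: t))
    (h2 : ¬ Has2413 (c :: t)) : ∃ u, IsSignedPerm u ∧ Mixed u ∧ OI (c :: t) (0 :: u) := by
  have hne : ∀ p ∈ t.zipIdx, p.1 ≠ c := by
    intro p hp h
    exact hc (h ▸ List.fst_mem_of_mem_zipIdx hp)
  have hinj : ∀ p ∈ t.zipIdx, ∀ q ∈ t.zipIdx, p.1 = q.1 → p = q := by
    have hn : (t.zipIdx.map Prod.fst).Nodup := by rwa [List.zipIdx_map_fst]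
    exact fun p hp q hq h => List.inj_on_of_nodup_map hn hp hq h
  have hval : ∀ p ∈ t.zipIdx, ∀ q ∈ t.zipIdx, p.2 = q.2 → p.1 = q.1 := by
    intro p hp q hq h
    rw [List.mem_zipIdx_iff_getElem?] at hp hq
    rw [h, hq] at hp
    exact (Option.some.inj hp).symm
  have htr := fun p hp q hq r hr => Prec.trans' hc ht h1 h2 (p := p) (q := q) (r := r) hp hq hr
  have hpw := pairwise_zipIdx t
  have hlen : t.zipIdx.length = t.length := List.length_zipIdx
  have hfst : t.zipIdx.map Prod.fst = t := List.zipIdx_map_fst _ _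
  have hnd : t.zipIdx.Nodup := by
    apply List.Nodup.of_map Prod.fst; rwa [hfst]
  generalize t.zipIdx = L at *
  have hirr : ∀ p, ¬ Prec c p p := by
    intro p h
    unfold Prec at h; omega
  have htri : ∀ p ∈ L, ∀ q ∈ L, p ≠ q → Prec c p q ∨ Prec c q p := by
    intro p hp q hq hpq
    have e1 : p.1 ≠ q.1 := fun h => hpq (hinj p hp q hq h)
    have e2 := hval p hp q hq
    have e3 := hne p hp
    have e4 := hne q hq
    unfold Prec
    omega
  obtain ⟨rk, hrk⟩ : ∃ rk : ℤ × ℕ → ℕ,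
      rk = fun p => (L.filter (fun q => decide (Prec c q p))).length := ⟨_, rfl⟩
  have hlt : ∀ p ∈ L, ∀ q ∈ L, Prec c p q → rk p < rk q := by
    intro p hp q hq hpq
    rw [hrk]
    exact length_filter_lt (P := fun r => Prec c r p) (Q := fun r => Prec c r q)
      (fun r hr h => htr r hr p hp q hq h hpq) hp hpq (hirr p)
  have hrkb : ∀ p ∈ L, rk p < L.length := by
    intro p hp
    rw [hrk]
    exact List.length_filter_lt_length_iff_exists.2 ⟨p, hp, by simpa using hirr p⟩
  obtain ⟨F, hF⟩ : ∃ F : ℤ × ℕ → ℤ,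
      F = fun p => if c < p.1 then (rk p : ℤ) + 1 else -((rk p : ℤ) + 1) := ⟨_, rfl⟩
  have hFv : ∀ p ∈ L, (c < p.1 ∧ F p = (rk p : ℤ) + 1) ∨ (p.1 < c ∧ F p = -((rk p : ℤ) + 1)) := by
    intro p hp
    have := hne p hp
    rw [hF]
    by_cases h : c < p.1
    · left; simp [h]
    · right; simp [h]; omega
  refine ⟨L.map F, ?_, ?_, ?_⟩
  · rw [isSignedPerm_iff]
    constructor
    · rw [List.map_map]
      apply List.Nodup.map_on _ hnd
      intro p hp q hq hpq
      by_contra hne'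
      have e1 := hFv p hp
      have e2 := hFv q hq
      simp only [Function.comp] at hpq
      rcases htri p hp q hq hne' with h | h
      · have := hlt p hp q hq h; omega
      · have := hlt q hq p hp h; omega
    · intro x hx
      obtain ⟨p, hp, rfl⟩ := List.mem_map.1 hx
      have e1 := hFv p hp
      have e2 := hrkb p hp
      rw [List.length_map]
      omega
  · unfold Mixed
    rw [List.pairwise_map]
    refine List.Pairwise.imp_of_mem ?_ hpw
    intro p q hp hq hpq
    have e1 := hFv p hp
    have e2 := hFv q hq
    have e3 := hlt p hp q hq
    unfold Prec at e3
    omega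
  · refine ⟨(c, 0) :: L.map (fun p => (p.1, F p)), ?_, ?_, ?_⟩
    · rw [List.map_cons, List.map_map]
      exact congrArg _ hfst
    · rw [List.map_cons, List.map_map]; rfl
    · intro x hx y hy
      rcases List.mem_cons.1 hx with rfl | hx <;> rcases List.mem_cons.1 hy with rfl | hy
      · simp
      · obtain ⟨q, hq, rfl⟩ := List.mem_map.1 hy
        have e2 := hFv q hq
        dsimp only; omega
      · obtain ⟨p, hp, rfl⟩ := List.mem_map.1 hx
        have e1 := hFv p hp
        dsimp only; omega
      · obtain ⟨p, hp, rfl⟩ := List.mem_map.1 hx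
        obtain ⟨q, hq, rfl⟩ := List.mem_map.1 hy
        rcases eq_or_ne p q with rfl | hpq
        · simp
        · have e1 := hFv p hp
          have e2 := hFv q hq
          have e3 := hlt p hp q hq
          have e4 := hlt q hq p hp
          have e5 : p.1 ≠ q.1 := fun h => hpq (hinj p hp q hq h)
          dsimp only
          unfold Prec at e3 e4
          omega

/-- Existence of `φ(w)`: the word `u` with `0u` order isomorphic to `w` has some image under `ψ`,
which is `w` because it is order isomorphic to `0u` too; inverting the derivation gives
`φ(w) = u`. -/
theorem exists_phi {w : List ℤ} (hne : w ≠ []) (hw : IsSepA w) : ∃ u, PhiRel w u := by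
  obtain ⟨hP, h1, h2⟩ := isSepA_iff.1 hw
  obtain ⟨c, t, rfl⟩ := List.exists_cons_of_ne_nil hne
  have hnd : (c :: t).Nodup := List.Nodup.of_map _ ((isSignedPerm_iff _).1 hP.1).1
  obtain ⟨hc, ht⟩ := List.nodup_cons.1 hnd
  obtain ⟨u, hu, hm, ho⟩ := exists_word hc ht h1 h2
  obtain ⟨w', hw'⟩ := exists_psi _ u rfl hu hm
  obtain ⟨-, hP', ho', hphi⟩ := psi_main hw' hu
  rw [hP.eq_of_OI hP' (ho.trans ho'.symm)]
  exact ⟨u, hphi⟩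

/-- `φ_n` is a well-defined map `K(S_{n+1}) → K(B_n)`, `ψ_n` is a
well-defined map `K(B_n) → K(S_{n+1})`, and they are mutually inverse bijections. -/
theorem phi_psi_bijections (n : ℕ) :
    (∀ w : List ℤ, w.length = n + 1 → IsSepA w → ∃! u : List ℤ, PhiRel w u) ∧
    (∀ w u : List ℤ, w.length = n + 1 → IsSepA w → PhiRel w u →
      u.length = n ∧ IsSepB u) ∧
    (∀ u : List ℤ, u.length = n → IsSepB u → ∃! w : List ℤ, PsiRel u w) ∧
    (∀ u w : List ℤ, u.length = n → IsSepB u → PsiRel u w →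
      w.length = n + 1 ∧ IsSepA w) ∧
    (∀ w u : List ℤ, w.length = n + 1 → IsSepA w → PhiRel w u → PsiRel u w) ∧
    (∀ u w : List ℤ, u.length = n → IsSepB u → PsiRel u w → PhiRel w u) := by
  have psi_sep : ∀ u w : List ℤ, IsSepB u → PsiRel u w →
      w.length = u.length + 1 ∧ IsSepA w ∧ OI w (0 :: u) ∧ PhiRel w u := by
    intro u w hu h
    obtain ⟨hs, -, h1, h2⟩ := isSepB_iff.1 hu
    obtain ⟨hl, hP, ho, hphi⟩ := psi_main h hs
    exact ⟨hl, isSepA_iff.2 ⟨hP, fun h => h1 (h.of_OI ho), fun h => h2 (h.of_OI ho)⟩, ho, hphi⟩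
  have phi_sep : ∀ w u : List ℤ, IsSepA w → PhiRel w u →
      w.length = u.length + 1 ∧ IsSepB u ∧ Mixed u ∧ PsiRel u w := by
    intro w u hw h
    obtain ⟨hP, h1, h2⟩ := isSepA_iff.1 hw
    obtain ⟨hl, hs, hm, hpsi⟩ := phi_main h hP
    obtain ⟨-, -, ho, -⟩ := psi_main hpsi hs
    exact ⟨hl, isSepB_iff.2 ⟨hs, hm, fun h => h1 (h.of_OI ho.symm),
      fun h => h2 (h.of_OI ho.symm)⟩, hm, hpsi⟩
  refine ⟨?_, ?_, ?_, ?_, ?_, ?_⟩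
  · intro w hl hw
    obtain ⟨u, hu⟩ := exists_phi (List.length_pos_iff.1 (by omega)) hw
    refine ⟨u, hu, fun u' hu' => ?_⟩
    obtain ⟨-, hs, hm, hpsi⟩ := phi_sep w u hw hu
    obtain ⟨-, hs', hm', hpsi'⟩ := phi_sep w u' hw hu'
    obtain ⟨-, -, ho, -⟩ := psi_sep u w hs hpsi
    obtain ⟨-, -, ho', -⟩ := psi_sep u' w hs' hpsi'
    exact eq_of_OI_cons_zero hs'.1 hs.1 hm' hm (ho'.symm.trans ho)
  · intro w u hl hw h
    obtain ⟨hl', hs, -⟩ := phi_sep w u hw h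
    exact ⟨by omega, hs⟩
  · intro u hl hu
    obtain ⟨hs, hm, -⟩ := isSepB_iff.1 hu
    obtain ⟨w, hw⟩ := exists_psi _ u rfl hs hm
    refine ⟨w, hw, fun w' hw' => ?_⟩
    obtain ⟨-, hP, ho, -⟩ := psi_main hw hs
    obtain ⟨-, hP', ho', -⟩ := psi_main hw' hs
    exact hP'.eq_of_OI hP (ho'.trans ho.symm)
  · intro u w hl hu h
    obtain ⟨hl', hs, -⟩ := psi_sep u w hu h
    exact ⟨by omega, hs⟩
  · intro w u _ hw h
    exact (phi_sep w u hw h).2.2.2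
  · intro u w _ hu h
    exact (psi_sep u w hu h).2.2.2

end

end SepPaperFormal
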